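/- arXiv:1508.03182 — 2 statements merged into one kernel-verified Lean document; each statement's English description precedes it below -/
import Mathlib

section
/- Let (Ω, 𝒜, μ) be a measure space, p ∈ [1,∞), and T a positive C₀-semigroup on L_p(μ) with generator A. If V : Ω → [0,∞] is T-admissible, then T_{0,V} = (T_V)_{−V}, i.e., the strong limit s-lim_{ε→0+} T_{εV} equals the strong limit s-lim_{n→∞} T_{V − V∧n}. -/
open MeasureTheory Filter Topology ENNReal

noncomputable section

namespace Absorption

variable {E : Type*} [NormedAddCommGroup E] [NormedSpace ℝ E]

/-- A one-parameter semigroup of bounded operators (for nonnegative times). -/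
def IsSemigroup (T : ℝ → E →L[ℝ] E) : Prop :=
  T 0 = ContinuousLinearMap.id ℝ E ∧
    ∀ s t : ℝ, 0 ≤ s → 0 ≤ t → T (s + t) = (T s).comp (T t)

/-- A `C₀`-semigroup: a one-parameter semigroup which is strongly continuous on `[0, ∞)`. -/
def IsC0Semigroup (T : ℝ → E →L[ℝ] E) : Prop :=
  IsSemigroup T ∧ ∀ f : E, ContinuousOn (fun t => T t f) (Set.Ici (0 : ℝ))

/-- `(f, g)` belongs to the graph of the generator of the semigroup `T`. -/
def InGenerator (T : ℝ → E →L[ℝ] E) (f g : E) : Prop :=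
  Tendsto (fun t : ℝ => t⁻¹ • (T t f - f)) (𝓝[>] (0 : ℝ)) (𝓝 g)

variable {Ω : Type*} [MeasurableSpace Ω]

/-- A function into a measurable space is *locally measurable* (w.r.t. `μ`) if on every set of
finite measure it coincides a.e. with a measurable function. -/
def LocallyMeasurable {α : Type*} [MeasurableSpace α] (μ : Measure Ω) (V : Ω → α) : Prop :=
  ∀ B : Set Ω, MeasurableSet B → μ B < ∞ →
    ∃ g : Ω → α, Measurable g ∧ ∀ᵐ ω ∂(μ.restrict B), V ω = g ω

/-- A set is a local `μ`-null set if its intersection with every measurable set of finite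
measure is null. -/
def IsLocalNullSet (μ : Measure Ω) (N : Set Ω) : Prop :=
  ∀ B : Set Ω, MeasurableSet B → μ B < ∞ → μ (N ∩ B) = 0

/-- Positivity of a family of operators on `L_p` (for positive times). -/
def IsPositiveSG {p : ℝ≥0∞} {μ : Measure Ω} [Fact (1 ≤ p)]
    (T : ℝ → Lp ℝ p μ →L[ℝ] Lp ℝ p μ) : Prop :=
  ∀ t : ℝ, 0 ≤ t → ∀ f : Lp ℝ p μ, 0 ≤ f → 0 ≤ T t f

/-- A band projection on the Banach lattice `L_p(μ)`: an idempotent operator `P`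
with `0 ≤ P f ≤ f` for all `f ≥ 0`. -/
def IsBandProjection {p : ℝ≥0∞} {μ : Measure Ω} [Fact (1 ≤ p)]
    (P : Lp ℝ p μ →L[ℝ] Lp ℝ p μ) : Prop :=
  P.comp P = P ∧ ∀ f : Lp ℝ p μ, 0 ≤ f → 0 ≤ P f ∧ P f ≤ f

/-- `S = (e^{t(A−W)})_{t ≥ 0}`: `S` is the `C₀`-semigroup whose generator is `A - W`,
where `A` is the generator of `T` and the bounded function `W` acts by multiplication. -/
def IsPerturbedSG (μ : Measure Ω) (p : ℝ≥0∞) [Fact (1 ≤ p)]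
    (T S : ℝ → Lp ℝ p μ →L[ℝ] Lp ℝ p μ) (W : Ω → ℝ) : Prop :=
  IsC0Semigroup S ∧
    ∀ f g : Lp ℝ p μ, InGenerator S f g ↔
      ∃ g₀ : Lp ℝ p μ, InGenerator T f g₀ ∧
        ⇑g =ᵐ[μ] fun ω => g₀ ω - W ω * f ω

/-- Same as `IsPerturbedSG`, for semigroups acting on a subspace `F` of `L_p(μ)`. -/
def IsPerturbedSGSub (μ : Measure Ω) (p : ℝ≥0∞) [Fact (1 ≤ p)] (F : Submodule ℝ (Lp ℝ p μ))
    (T S : ℝ → F →L[ℝ] F) (W : Ω → ℝ) : Prop :=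
  IsC0Semigroup S ∧
    ∀ f g : F, InGenerator S f g ↔
      ∃ g₀ : F, InGenerator T f g₀ ∧
        ⇑(g : Lp ℝ p μ) =ᵐ[μ] fun ω => (g₀ : Lp ℝ p μ) ω - W ω * (f : Lp ℝ p μ) ω

/-- The truncation `V ∧ n` of `V : Ω → [0,∞]`, as a real-valued function. -/
def trunc (V : Ω → ℝ≥0∞) (n : ℕ) : Ω → ℝ := fun ω => (min (V ω) (n : ℝ≥0∞)).toReal

/-- The scalar multiple `ε V` of an absorption rate `V : Ω → [0,∞]`. -/
def smulRate (ε : ℝ) (V : Ω → ℝ≥0∞) : Ω → ℝ≥0∞ := fun ω => ENNReal.ofReal ε * V ω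

/-- The absorption rate `V - V ∧ n` (with value `∞` wherever `V = ∞`). -/
def resid (V : Ω → ℝ≥0∞) (n : ℕ) : Ω → ℝ≥0∞ := fun ω => V ω - min (V ω) (n : ℝ≥0∞)

/-- `TV` is the absorption semigroup `T_V` associated with the rate `V : Ω → [0,∞]`, i.e.
the strong limit `T_V(t) = s-lim_{n→∞} e^{t(A - V∧n)}` (for `t ≥ 0`). -/
def IsAbsorptionSG (μ : Measure Ω) (p : ℝ≥0∞) [Fact (1 ≤ p)]
    (T : ℝ → Lp ℝ p μ →L[ℝ] Lp ℝ p μ) (V : Ω → ℝ≥0∞)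
    (TV : ℝ → Lp ℝ p μ →L[ℝ] Lp ℝ p μ) : Prop :=
  ∃ S : ℕ → ℝ → Lp ℝ p μ →L[ℝ] Lp ℝ p μ,
    (∀ n, IsPerturbedSG μ p T (S n) (trunc V n)) ∧
    ∀ t : ℝ, 0 ≤ t → ∀ f, Tendsto (fun n => S n t f) atTop (𝓝 (TV t f))

/-- `V : Ω → [0,∞]` is `T`-admissible: `V` is locally measurable, the strong limits
`T_V(t) = s-lim_{n→∞} e^{t(A - V∧n)}` exist, and `T_V` is a `C₀`-semigroup. -/
def Admissible (μ : Measure Ω) (p : ℝ≥0∞) [Fact (1 ≤ p)]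
    (T : ℝ → Lp ℝ p μ →L[ℝ] Lp ℝ p μ) (V : Ω → ℝ≥0∞) : Prop :=
  LocallyMeasurable μ V ∧
  ∃ TV, IsAbsorptionSG μ p T V TV ∧ IsC0Semigroup TV

/-- The truncation `(V ∧ n) ∨ (−n)` of an extended-real-valued rate, as a real function. -/
def truncE (V : Ω → EReal) (n : ℕ) : Ω → ℝ :=
  fun ω => (max (min (V ω) (n : EReal)) (-(n : EReal))).toReal

/-- `TV` is the absorption semigroup `T_V` of an extended-real-valued rate `V`:
`T_V(t) = s-lim_{n→∞} e^{t(A - (V∧n)∨(−n))}` (for `t ≥ 0`). -/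
def IsAbsorptionSGE (μ : Measure Ω) (p : ℝ≥0∞) [Fact (1 ≤ p)]
    (T : ℝ → Lp ℝ p μ →L[ℝ] Lp ℝ p μ) (V : Ω → EReal)
    (TV : ℝ → Lp ℝ p μ →L[ℝ] Lp ℝ p μ) : Prop :=
  ∃ S : ℕ → ℝ → Lp ℝ p μ →L[ℝ] Lp ℝ p μ,
    (∀ n, IsPerturbedSG μ p T (S n) (truncE V n)) ∧
    ∀ t : ℝ, 0 ≤ t → ∀ f, Tendsto (fun n => S n t f) atTop (𝓝 (TV t f))

/-- `T`-admissibility for an extended-real-valued absorption rate `V`. -/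
def AdmissibleE (μ : Measure Ω) (p : ℝ≥0∞) [Fact (1 ≤ p)]
    (T : ℝ → Lp ℝ p μ →L[ℝ] Lp ℝ p μ) (V : Ω → EReal) : Prop :=
  LocallyMeasurable μ V ∧
  ∃ TV, IsAbsorptionSGE μ p T V TV ∧ IsC0Semigroup TV

section Abstract

theorem locBound [CompleteSpace E] {T : ℝ → E →L[ℝ] E} (hT : IsC0Semigroup T) (t : ℝ) :
    ∃ K : ℝ, 0 ≤ K ∧ ∀ s, 0 ≤ s → s ≤ t → ‖T s‖ ≤ K := by
  have h : ∀ x : E, ∃ C, ∀ i : Set.Icc (0:ℝ) t, ‖T i x‖ ≤ C := by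
    intro x
    have hc : ContinuousOn (fun t => T t x) (Set.Icc 0 t) :=
      (hT.2 x).mono (fun y hy => hy.1)
    obtain ⟨C, hC⟩ := isCompact_Icc.exists_bound_of_continuousOn hc
    exact ⟨C, fun i => hC i i.2⟩
  obtain ⟨C, hC⟩ := banach_steinhaus (g := fun i : Set.Icc (0:ℝ) t => T i) h
  refine ⟨max C 0, le_max_right _ _, fun s h0 h1 => ?_⟩
  exact (hC ⟨s, h0, h1⟩).trans (le_max_left _ _)

theorem jointTendsto [CompleteSpace E] {T : ℝ → E →L[ℝ] E} (hT : IsC0Semigroup T)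
    {ι : Type*} {l : Filter ι} {s : ι → ℝ} {x : ι → E} {s0 : ℝ} {x0 : E} (h0 : 0 ≤ s0)
    (hs : Tendsto s l (𝓝 s0)) (hs' : ∀ᶠ i in l, 0 ≤ s i) (hx : Tendsto x l (𝓝 x0)) :
    Tendsto (fun i => T (s i) (x i)) l (𝓝 (T s0 x0)) := by
  obtain ⟨K, hK0, hK⟩ := locBound hT (s0 + 1)
  have h1 : Tendsto (fun i => T (s i) x0) l (𝓝 (T s0 x0)) := by
    have := (hT.2 x0) s0 h0
    exact this.tendsto.comp (tendsto_nhdsWithin_iff.2 ⟨hs, hs'⟩)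
  have h2 : Tendsto (fun i => T (s i) (x i - x0)) l (𝓝 0) := by
    have h3 : Tendsto (fun i => K * ‖x i - x0‖) l (𝓝 0) := by
      have : Tendsto (fun i => x i - x0) l (𝓝 0) := by
        simpa using hx.sub_const x0
      simpa using (this.norm.const_mul K)
    refine squeeze_zero_norm' ?_ h3
    have h4 : ∀ᶠ i in l, s i < s0 + 1 := hs.eventually (gt_mem_nhds (by linarith))
    filter_upwards [hs', h4] with i hi hi'
    exact (ContinuousLinearMap.le_opNorm _ _).trans
      (mul_le_mul_of_nonneg_right (hK _ hi hi'.le) (norm_nonneg _))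
  have := h1.add h2
  simpa using this

theorem orbitGen {S : ℝ → E →L[ℝ] E} (hS : IsC0Semigroup S) {g h : E}
    (hg : InGenerator S g h) {r : ℝ} (hr : 0 ≤ r) : InGenerator S (S r g) (S r h) := by
  have h1 := ((S r).continuous.tendsto h).comp hg
  refine h1.congr' ?_
  filter_upwards [self_mem_nhdsWithin] with t ht
  have ht : (0:ℝ) < t := ht
  have e : S t (S r g) = S r (S t g) := by
    have e1 := hS.1.2 t r ht.le hr
    have e2 := hS.1.2 r t hr ht.le
    rw [add_comm] at e1
    rw [e1] at e2
    simpa using congrArg (fun A => A g) e2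
  simp [e]

theorem denseGen [CompleteSpace E] {S : ℝ → E →L[ℝ] E} (hS : IsC0Semigroup S) (f : E) {δ : ℝ}
    (hδ : 0 < δ) : ∃ g h, InGenerator S g h ∧ ‖g - f‖ < δ := by
  let u : ℝ → E := fun s => S (max s 0) f
  have hu : Continuous u := by
    have : ContinuousOn (fun s : ℝ => S (max s 0) f) Set.univ :=
      (hS.2 f).comp (f := fun s : ℝ => max s 0) (by fun_prop) (fun x _ => Set.mem_Ici.2 (le_max_right _ _))
    exact continuousOn_univ.1 this
  have hu0 : u 0 = f := by simp [u, hS.1.1]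
  let U : ℝ → E := fun x => ∫ s in (0:ℝ)..x, u s
  have hU : ∀ x, HasDerivAt U (u x) x := fun x =>
    intervalIntegral.integral_hasDerivAt_right (hu.intervalIntegrable _ _)
      (hu.stronglyMeasurableAtFilter _ _) hu.continuousAt
  have hU0 : U 0 = 0 := by simp [U]
  -- key: S t (U h) = U (t+h) - U t
  have key : ∀ t h : ℝ, 0 ≤ t → 0 ≤ h → S t (U h) = U (t + h) - U t := by
    intro t h ht hh
    have e1 : S t (U h) = ∫ s in (0:ℝ)..h, S t (u s) :=
      ((S t).intervalIntegral_comp_comm (hu.intervalIntegrable _ _)).symm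
    have e2 : ∫ s in (0:ℝ)..h, S t (u s) = ∫ s in (0:ℝ)..h, u (s + t) := by
      refine intervalIntegral.integral_congr fun s hs => ?_
      rw [Set.uIcc_of_le hh] at hs
      have hs0 : 0 ≤ s := hs.1
      simp only [u, max_eq_left hs0, max_eq_left (add_nonneg hs0 ht)]
      rw [add_comm, hS.1.2 t s ht hs0]; rfl
    have e3 : ∫ s in (0:ℝ)..h, u (s + t) = ∫ s in (0+t)..(h+t), u s := by
      simp
    rw [e1, e2, e3]
    simp only [U]
    rw [zero_add, add_comm h t]
    exact (intervalIntegral.integral_interval_sub_left (hu.intervalIntegrable _ _)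
      (hu.intervalIntegrable _ _)).symm
  have gen : ∀ h : ℝ, 0 ≤ h → InGenerator S (U h) (u h - u 0) := by
    intro h hh
    have d1 : HasDerivAt (fun t => U (t + h) - U t) (u (0 + h) - u 0) 0 := by
      have := (hU (0 + h)).comp_add_const 0 h
      exact this.sub (hU 0)
    rw [hasDerivAt_iff_tendsto_slope] at d1
    have d2 := d1.mono_left (nhdsWithin_mono (0:ℝ) (s := Set.Ioi 0) (fun x hx => ne_of_gt hx))
    unfold InGenerator
    rw [zero_add] at d2
    refine d2.congr' ?_
    filter_upwards [self_mem_nhdsWithin] with t ht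
    have ht : (0:ℝ) < t := ht
    rw [key t h ht.le hh]
    simp [slope, hU0]
  have lim : Tendsto (fun h : ℝ => h⁻¹ • U h) (𝓝[>] 0) (𝓝 f) := by
    have d1 := hU 0
    rw [hasDerivAt_iff_tendsto_slope] at d1
    have d2 := d1.mono_left (nhdsWithin_mono (0:ℝ) (s := Set.Ioi 0) (fun x hx => ne_of_gt hx))
    rw [hu0] at d2
    refine d2.congr fun t => ?_
    simp [slope, hU0]
  have ev := (Metric.tendsto_nhds.1 lim δ hδ).and self_mem_nhdsWithin
  obtain ⟨h, h1, h2⟩ := ev.exists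
  have h2 : (0:ℝ) < h := h2
  refine ⟨h⁻¹ • U h, h⁻¹ • (u h - u 0), ?_, by simpa [dist_eq_norm] using h1⟩
  have := (gen h h2.le).const_smul h⁻¹
  refine this.congr fun t => ?_
  simp only [map_smul, ← smul_sub]
  rw [smul_comm]

variable {T S : ℝ → E →L[ℝ] E} {B : E →L[ℝ] E}

theorem localError [CompleteSpace E] (hT : IsC0Semigroup T) (hS : IsC0Semigroup S)
    (hB : ∀ f g, InGenerator S f g → ∃ g₀, InGenerator T f g₀ ∧ g = g₀ - B f)
    {g h : E} (hg : InGenerator S g h) {τ δ : ℝ} (hτ : 0 ≤ τ)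
    (hδ : ∀ r, 0 ≤ r → r ≤ τ → ‖T (τ - r) (B (S r g)) - B g‖ ≤ δ) :
    ‖S τ g - T τ g + τ • B g‖ ≤ δ * τ := by
  let ψ : ℝ → E := fun r => T (τ - r) (S r g) + r • B g
  have hc : ContinuousOn ψ (Set.Icc 0 τ) := by
    intro r hr
    have h1 : Tendsto (fun r => T (τ - r) (S r g)) (𝓝[Set.Icc 0 τ] r)
        (𝓝 (T (τ - r) (S r g))) := by
      refine jointTendsto hT (by linarith [hr.2]) ?_ ?_ ?_
      · exact ((continuous_const.sub continuous_id).tendsto r).mono_left nhdsWithin_le_nhds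
      · filter_upwards [self_mem_nhdsWithin] with x hx
        linarith [hx.2]
      · exact ((hS.2 g) r hr.1).tendsto.mono_left (nhdsWithin_mono _ fun x hx => hx.1)
    refine ContinuousWithinAt.add h1 ?_
    exact (continuous_id.smul continuous_const).continuousWithinAt
  have hd : ∀ r ∈ Set.Ico 0 τ, HasDerivWithinAt ψ (-(T (τ - r) (B (S r g))) + B g)
      (Set.Ici r) r := by
    intro r hr
    refine HasDerivWithinAt.add ?_ ?_
    · rw [← hasDerivWithinAt_Ioi_iff_Ici]
      rw [hasDerivWithinAt_iff_tendsto_slope' (by simp)]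
      have hy := orbitGen hS hg hr.1
      obtain ⟨g₀, hg₀, e⟩ := hB _ _ hy
      have hy' : InGenerator S (S r g) (S r h) := hy
      have e' : -(T (τ - r) (B (S r g))) = T (τ - r) (S r h - g₀) := by
        rw [e]; simp
      rw [e']
      have sh : Tendsto (fun x => x - r) (𝓝[>] r) (𝓝[>] 0) := by
        refine tendsto_nhdsWithin_iff.2 ⟨?_, ?_⟩
        · have : Tendsto (fun x => x - r) (𝓝 r) (𝓝 (r - r)) :=
            (continuous_id.sub continuous_const).tendsto r
          rw [sub_self] at this
          exact this.mono_left nhdsWithin_le_nhds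
        · filter_upwards [self_mem_nhdsWithin] with x hx
          have hx : r < x := hx
          simpa using hx
      have hlim := (hy'.sub hg₀).comp sh
      have hlt : ∀ᶠ x in 𝓝[>] r, x < τ := nhdsWithin_le_nhds (gt_mem_nhds hr.2)
      have J := jointTendsto hT (s0 := τ - r) (s := fun x => τ - x) (by linarith [hr.2])
        (((continuous_const.sub continuous_id).tendsto r).mono_left nhdsWithin_le_nhds)
        (hlt.mono fun x hx => by linarith) hlim
      refine J.congr' ?_
      filter_upwards [self_mem_nhdsWithin, hlt] with x hx hx2
      have hx : r < x := hx
      have e1 : S x g = S (x - r) (S r g) := by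
        have := hS.1.2 (x - r) r (by linarith) hr.1
        rw [sub_add_cancel] at this
        rw [this]; rfl
      have e2 : T (τ - r) (S r g) = T (τ - x) (T (x - r) (S r g)) := by
        have := hT.1.2 (τ - x) (x - r) (by linarith) (by linarith)
        rw [sub_add_sub_cancel] at this
        rw [this]; rfl
      simp only [slope, Function.comp, vsub_eq_sub]
      rw [e1, e2]
      simp only [map_sub, map_smul, ← smul_sub]
      congr 1
      abel
    · simpa using ((hasDerivAt_id r).smul_const (B g)).hasDerivWithinAt
  have hb : ∀ r ∈ Set.Ico 0 τ, ‖-(T (τ - r) (B (S r g))) + B g‖ ≤ δ := by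
    intro r hr
    have := hδ r hr.1 hr.2.le
    rwa [← norm_neg, neg_sub, sub_eq_neg_add] at this
  have := norm_image_sub_le_of_norm_deriv_right_le_segment hc hd hb τ ⟨hτ, le_rfl⟩
  simp only [ψ, sub_self, sub_zero, zero_smul, add_zero] at this
  rw [hT.1.1, hS.1.1] at this
  convert this using 2
  simp; abel

theorem unifSmall [CompleteSpace E] (hT : IsC0Semigroup T) (hS : IsC0Semigroup S)
    (P : E →L[ℝ] E) (f : E) (t : ℝ) {δ : ℝ} (hδ : 0 < δ) :
    ∃ η > 0, ∀ ρ x y : ℝ, 0 ≤ ρ → ρ ≤ t → 0 ≤ x → x ≤ t → 0 ≤ y → y ≤ t → ρ < η → |y - x| < η →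
      ‖T ρ (P (S y f)) - P (S x f)‖ ≤ δ := by
  let Ψ : ℝ × ℝ → E := fun q => T q.1 (P (S q.2 f))
  have hc : ContinuousOn Ψ (Set.Icc 0 t ×ˢ Set.Icc 0 t) := by
    intro q hq
    refine jointTendsto hT hq.1.1 ?_ ?_ ?_
    · exact (continuous_fst.tendsto q).mono_left nhdsWithin_le_nhds
    · filter_upwards [self_mem_nhdsWithin] with x hx using hx.1.1
    · refine (P.continuous.tendsto _).comp ?_
      have h1 : Tendsto (fun r => S r f) (𝓝[Set.Ici 0] q.2) (𝓝 (S q.2 f)) := hS.2 f q.2 hq.2.1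
      refine h1.comp (tendsto_nhdsWithin_iff.2 ⟨?_, ?_⟩)
      · exact (continuous_snd.tendsto q).mono_left nhdsWithin_le_nhds
      · filter_upwards [self_mem_nhdsWithin] with x hx using hx.2.1
  have hu := (isCompact_Icc.prod isCompact_Icc).uniformContinuousOn_of_continuous hc
  obtain ⟨η, hη, H⟩ := Metric.uniformContinuousOn_iff.1 hu δ hδ
  refine ⟨η, hη, fun ρ x y h1 h2 h3 h4 h5 h6 h7 h8 => ?_⟩
  have := H (ρ, y) ⟨⟨h1, h2⟩, ⟨h5, h6⟩⟩ (0, x) ⟨⟨le_rfl, h1.trans h2⟩, ⟨h3, h4⟩⟩ (by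
    rw [Prod.dist_eq]
    refine max_lt ?_ ?_
    · simpa [Real.dist_eq, abs_of_nonneg h1] using h7
    · simpa [Real.dist_eq] using h8)
  simp only [Ψ, dist_eq_norm] at this
  rw [hT.1.1] at this
  exact this.le

theorem telescoping {F G : E →L[ℝ] E} {f : E} {K d : ℝ} (N : ℕ) (hK : 0 ≤ K)
    (hF : ∀ n ≤ N, ∀ y, ‖(F ^ n) y‖ ≤ K * ‖y‖)
    (hd : ∀ n < N, ‖G ((G ^ n) f) - F ((G ^ n) f)‖ ≤ d) :
    ∀ n j : ℕ, n + j ≤ N → ‖(F ^ j) ((G ^ n) f - (F ^ n) f)‖ ≤ n * (K * d) := by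
  intro n
  induction n with
  | zero => intro j _; simp
  | succ n ih =>
    intro j hj
    have e : (F ^ j) ((G ^ (n+1)) f - (F ^ (n+1)) f) =
        (F ^ (j+1)) ((G ^ n) f - (F ^ n) f) + (F ^ j) (G ((G ^ n) f) - F ((G ^ n) f)) := by
      rw [pow_succ F j, pow_succ' G n, pow_succ' F n]
      simp only [mul_apply_eq_comp, map_sub]
      abel
    rw [e]
    have h1 := ih (j+1) (by omega)
    have h2 := (hF j (by omega) (G ((G ^ n) f) - F ((G ^ n) f))).trans
      (mul_le_mul_of_nonneg_left (hd n (by omega)) hK)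
    refine (norm_add_le _ _).trans ?_
    rw [Nat.cast_succ]
    linarith

theorem sg_pow {S : ℝ → E →L[ℝ] E} (hS : IsC0Semigroup S) {τ : ℝ} (hτ : 0 ≤ τ) (n : ℕ) :
    (S τ) ^ n = S (n * τ) := by
  induction n with
  | zero => simp [hS.1.1]; rfl
  | succ n ih =>
    rw [pow_succ, ih]
    have := hS.1.2 (n * τ) τ (by positivity) hτ
    push_cast
    rw [add_mul, one_mul, this]; rfl

theorem trotterGen [CompleteSpace E] (hT : IsC0Semigroup T) (hS : IsC0Semigroup S)
    (hB : ∀ f g, InGenerator S f g → ∃ g₀, InGenerator T f g₀ ∧ g = g₀ - B f)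
    {Q : ℝ → E →L[ℝ] E} {C : ℝ} (hC : 0 ≤ C)
    (hQ : ∀ τ, 0 ≤ τ → ∀ g, ‖Q τ g - g + τ • B g‖ ≤ C * τ ^ 2 * ‖g‖)
    {t K : ℝ} (ht : 0 ≤ t) (hK : 0 ≤ K)
    (hst : ∀ τ, 0 ≤ τ → ∀ n : ℕ, n * τ ≤ t → ∀ y, ‖((Q τ * T τ) ^ n) y‖ ≤ K * ‖y‖)
    {f h : E} (hf : InGenerator S f h) {ε : ℝ} (hε : 0 < ε) :
    ∀ᶠ n : ℕ in atTop, ‖((Q (t / n) * T (t / n)) ^ n) f - S t f‖ < ε := by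
  obtain ⟨K1, hK1, bT⟩ := locBound hT t
  obtain ⟨K2, hK2, bS⟩ := locBound hS t
  set A : ℝ := K * t * (1 + ‖B‖ + C * (K1 * (K2 * ‖f‖))) with hA
  have hA0 : 0 ≤ A := by positivity
  set δ : ℝ := ε / (A + 1) with hδdef
  have hδ : 0 < δ := by positivity
  have hAδ : A * δ < ε := by
    rw [hδdef, mul_div_assoc', div_lt_iff₀ (by positivity)]
    nlinarith
  obtain ⟨η1, hη1, U1⟩ := unifSmall hT hS B f t hδ
  obtain ⟨η2, hη2, U2⟩ := unifSmall hT hS (ContinuousLinearMap.id ℝ E) f t hδ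
  have hlim : Tendsto (fun n : ℕ => t / (n:ℝ)) atTop (𝓝 0) :=
    tendsto_const_div_atTop_nhds_zero_nat t
  have hev : ∀ᶠ n : ℕ in atTop, t / (n:ℝ) < min δ (min η1 η2) :=
    hlim.eventually (gt_mem_nhds (by positivity))
  filter_upwards [hev, eventually_ge_atTop 1] with n hn hn1
  have hnpos : (0:ℝ) < n := by exact_mod_cast hn1
  set τ : ℝ := t / n with hτdef
  have hτ : 0 ≤ τ := by positivity
  have hnτ : n * τ = t := by rw [hτdef]; field_simp
  have hτδ : τ < δ := hn.trans_le (min_le_left _ _)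
  have hτ1 : τ < η1 := hn.trans_le ((min_le_right _ _).trans (min_le_left _ _))
  have hτ2 : τ < η2 := hn.trans_le ((min_le_right _ _).trans (min_le_right _ _))
  set F := Q τ * T τ with hF
  have loc : ∀ k < n, ‖S τ ((S τ ^ k) f) - F ((S τ ^ k) f)‖ ≤
      τ * (δ * (1 + ‖B‖ + C * (K1 * (K2 * ‖f‖)))) := by
    intro k hk
    rw [sg_pow hS hτ]
    set x : ℝ := k * τ with hx
    have hx0 : 0 ≤ x := by positivity
    have hk' : (k:ℝ) + 1 ≤ n := by exact_mod_cast hk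
    have hxt : x + τ ≤ t := by
      rw [hx, ← hnτ]
      nlinarith
    have hτt : τ ≤ t := by linarith
    set g := S x f with hg
    have i1 : ‖S τ g - T τ g + τ • B g‖ ≤ δ * τ := by
      refine localError hT hS hB (orbitGen hS hf hx0) hτ fun r hr0 hr1 => ?_
      have e : S r g = S (r + x) f := by rw [hS.1.2 r x hr0 hx0]; rfl
      rw [e]
      refine U1 (τ - r) x (r + x) ?_ ?_ ?_ ?_ ?_ ?_ ?_ ?_ <;> try linarith
      rw [add_sub_cancel_right, abs_of_nonneg hr0]; linarith
    have hgn : ‖g‖ ≤ K2 * ‖f‖ := (ContinuousLinearMap.le_opNorm _ _).trans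
      (mul_le_mul_of_nonneg_right (bS x hx0 (by linarith)) (norm_nonneg _))
    have hTg : ‖T τ g‖ ≤ K1 * (K2 * ‖f‖) := (ContinuousLinearMap.le_opNorm _ _).trans
      (mul_le_mul (bT τ hτ hτt) hgn (norm_nonneg _) hK1)
    have i2 : ‖Q τ (T τ g) - T τ g + τ • B (T τ g)‖ ≤ τ * (δ * (C * (K1 * (K2 * ‖f‖)))) := by
      refine (hQ τ hτ _).trans ?_
      calc C * τ ^ 2 * ‖T τ g‖ ≤ C * τ ^ 2 * (K1 * (K2 * ‖f‖)) := by gcongr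
        _ = τ * (τ * (C * (K1 * (K2 * ‖f‖)))) := by ring
        _ ≤ _ := by gcongr
    have i3 : ‖τ • B (T τ g - g)‖ ≤ τ * (‖B‖ * δ) := by
      rw [norm_smul, Real.norm_of_nonneg hτ]
      gcongr
      refine (B.le_opNorm _).trans ?_
      gcongr
      have := U2 τ x x hτ hτt hx0 (by linarith) hx0 (by linarith) hτ2 (by simpa using hη2)
      simpa using this
    have e : S τ g - F g = (S τ g - T τ g + τ • B g) - (Q τ (T τ g) - T τ g + τ • B (T τ g))
        + τ • B (T τ g - g) := by
      simp only [hF, mul_apply_eq_comp, map_sub, smul_sub]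
      abel
    rw [e]
    calc _ ≤ δ * τ + τ * (δ * (C * (K1 * (K2 * ‖f‖)))) + τ * (‖B‖ * δ) := by
          refine (norm_add_le _ _).trans (add_le_add ((norm_sub_le _ _).trans
            (add_le_add i1 i2)) i3)
      _ = _ := by ring
  have tel := telescoping (F := F) (G := S τ) (f := f) n hK
    (fun m hm y => hst τ hτ m (by
      have : (m:ℝ) ≤ n := by exact_mod_cast hm
      rw [← hnτ]; gcongr) y) loc n 0 (by omega)
  rw [sg_pow hS hτ, hnτ] at tel
  rw [norm_sub_rev]
  refine lt_of_le_of_lt ?_ hAδ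
  simp only [pow_zero, one_apply_eq_self] at tel
  refine tel.trans (le_of_eq ?_)
  rw [hA]
  linear_combination (K * (δ * (1 + ‖B‖ + C * (K1 * (K2 * ‖f‖))))) * hnτ

theorem trotter [CompleteSpace E] (hT : IsC0Semigroup T) (hS : IsC0Semigroup S)
    (hB : ∀ f g, InGenerator S f g → ∃ g₀, InGenerator T f g₀ ∧ g = g₀ - B f)
    {Q : ℝ → E →L[ℝ] E} {C : ℝ} (hC : 0 ≤ C)
    (hQ : ∀ τ, 0 ≤ τ → ∀ g, ‖Q τ g - g + τ • B g‖ ≤ C * τ ^ 2 * ‖g‖)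
    {t K : ℝ} (ht : 0 ≤ t) (hK : 0 ≤ K)
    (hst : ∀ τ, 0 ≤ τ → ∀ n : ℕ, n * τ ≤ t → ∀ y, ‖((Q τ * T τ) ^ n) y‖ ≤ K * ‖y‖) (f : E) :
    Tendsto (fun n : ℕ => ((Q (t / n) * T (t / n)) ^ n) f) atTop (𝓝 (S t f)) := by
  rw [Metric.tendsto_nhds]
  intro ε hε
  set δ : ℝ := ε / (2 * (K + ‖S t‖ + 1)) with hδdef
  have hδ : 0 < δ := by positivity
  obtain ⟨g, h, hg, hgf⟩ := denseGen hS f hδ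
  filter_upwards [trotterGen hT hS hB hC hQ ht hK hst hg (half_pos hε), eventually_ge_atTop 1]
    with n hn hn1
  have hnpos : (0:ℝ) < n := by exact_mod_cast hn1
  set F := Q (t / n) * T (t / n)
  have h1 : ‖(F ^ n) (f - g)‖ ≤ K * δ := by
    refine (hst (t / n) (by positivity) n (by field_simp; exact le_rfl) _).trans ?_
    rw [norm_sub_rev]; gcongr
  have h2 : ‖S t (g - f)‖ ≤ ‖S t‖ * δ := by
    refine (ContinuousLinearMap.le_opNorm _ _).trans ?_
    gcongr
  rw [dist_eq_norm]
  have e : (F ^ n) f - S t f = (F ^ n) (f - g) + ((F ^ n) g - S t g) + S t (g - f) := by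
    simp only [map_sub]; abel
  rw [e]
  have h3 : (K + ‖S t‖ + 1) * δ = ε / 2 := by
    rw [hδdef]; field_simp
  calc _ ≤ ‖(F ^ n) (f - g)‖ + ‖(F ^ n) g - S t g‖ + ‖S t (g - f)‖ := norm_add₃_le
    _ < K * δ + ε / 2 + ‖S t‖ * δ := by linarith
    _ < ε := by nlinarith

end Abstract

section LpPart

variable {μ : Measure Ω} {p : ℝ≥0∞} [Fact (1 ≤ p)]

theorem LocallyMeasurable.comp' {α β : Type*} [MeasurableSpace α] [MeasurableSpace β]
    {V : Ω → α} (hV : LocallyMeasurable μ V) {φ : α → β} (hφ : Measurable φ) :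
    LocallyMeasurable μ (fun ω => φ (V ω)) := by
  intro B hB hB'
  obtain ⟨g, hg, h⟩ := hV B hB hB'
  exact ⟨fun ω => φ (g ω), hφ.comp hg, h.mono fun ω h => by simp [h]⟩

theorem aesm_mul (hp : p ≠ ∞) {w : Ω → ℝ} (hw : LocallyMeasurable μ w) (f : Lp ℝ p μ) :
    AEStronglyMeasurable (fun ω => w ω * f ω) μ := by
  have hp0 : p ≠ 0 := by
    have : (1 : ℝ≥0∞) ≤ p := Fact.out
    intro h; simp [h] at this
  obtain ⟨t, ht, hft, hσ⟩ := (Lp.finStronglyMeasurable f hp0 hp).exists_set_sigmaFinite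
  have hwt : AEMeasurable w (μ.restrict t) := by
    have e : (⋃ n, spanningSets (μ.restrict t) n ∩ t) = t := by
      rw [← Set.iUnion_inter, iUnion_spanningSets, Set.univ_inter]
    rw [← e, aemeasurable_iUnion_iff]
    intro n
    have hm : MeasurableSet (spanningSets (μ.restrict t) n ∩ t) :=
      (measurableSet_spanningSets _ n).inter ht
    have hfin : μ (spanningSets (μ.restrict t) n ∩ t) < ∞ := by
      have := measure_spanningSets_lt_top (μ.restrict t) n
      rwa [Measure.restrict_apply (measurableSet_spanningSets _ n)] at this
    obtain ⟨g, hg, h⟩ := hw _ hm hfin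
    exact ⟨g, hg, h⟩
  have h1 : AEMeasurable (fun ω => w ω * f ω) (μ.restrict t) :=
    hwt.mul (Lp.aestronglyMeasurable f).aemeasurable.restrict
  have h2 : AEMeasurable (t.indicator fun ω => w ω * f ω) μ := (aemeasurable_indicator_iff ht).2 h1
  refine (h2.congr (Eventually.of_forall fun ω => ?_)).aestronglyMeasurable
  by_cases hω : ω ∈ t
  · simp [hω]
  · simp [hω, hft ω hω]

theorem exists_mulOp (hp : p ≠ ∞) {w : Ω → ℝ} (hw : LocallyMeasurable μ w) {C : ℝ}
    (hC : ∀ ω, |w ω| ≤ C) :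
    ∃ M : Lp ℝ p μ →L[ℝ] Lp ℝ p μ, ∀ f, ⇑(M f) =ᵐ[μ] fun ω => w ω * f ω := by
  have hmem : ∀ f : Lp ℝ p μ, MemLp (fun ω => w ω * f ω) p μ := fun f =>
    (Lp.memLp f).of_le_mul (c := C) (aesm_mul hp hw f) (Eventually.of_forall fun ω => by
      rw [norm_mul]; exact mul_le_mul_of_nonneg_right (hC ω) (norm_nonneg _))
  have hco : ∀ f, ⇑((hmem f).toLp) =ᵐ[μ] fun ω => w ω * f ω := fun f => (hmem f).coeFn_toLp
  let M : Lp ℝ p μ →ₗ[ℝ] Lp ℝ p μ :=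
    { toFun := fun f => (hmem f).toLp
      map_add' := by
        intro f g
        apply Lp.ext
        filter_upwards [hco (f + g), hco f, hco g, Lp.coeFn_add f g,
          Lp.coeFn_add (hmem f).toLp (hmem g).toLp] with ω h1 h2 h3 h4 h5
        rw [h1, h5, Pi.add_apply, h2, h3, h4, Pi.add_apply]; ring
      map_smul' := by
        intro c f
        apply Lp.ext
        filter_upwards [hco (c • f), hco f, Lp.coeFn_smul c f,
          Lp.coeFn_smul c (hmem f).toLp] with ω h1 h2 h4 h5
        rw [h1, RingHom.id_apply, h5, Pi.smul_apply, h2, h4, Pi.smul_apply]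
        simp only [smul_eq_mul]; ring }
  refine ⟨M.mkContinuous C fun f => ?_, fun f => hco f⟩
  refine Lp.norm_le_mul_norm_of_ae_le_mul ?_
  filter_upwards [hco f] with ω h1
  change ‖((hmem f).toLp) ω‖ ≤ _
  rw [h1, norm_mul]
  exact mul_le_mul_of_nonneg_right (hC ω) (norm_nonneg _)

theorem exp_quad {x : ℝ} (hx : 0 ≤ x) : |Real.exp (-x) - 1 + x| ≤ x ^ 2 := by
  have h1 : 0 ≤ Real.exp (-x) - 1 + x := by linarith [Real.add_one_le_exp (-x)]
  rw [abs_of_nonneg h1]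
  by_cases h : x ≤ 1
  · have := Real.abs_exp_sub_one_sub_id_le (x := -x) (by rw [abs_neg, abs_of_nonneg hx]; exact h)
    have := (abs_le.1 this).2
    nlinarith
  · have : Real.exp (-x) ≤ 1 := Real.exp_le_one_iff.2 (by linarith)
    nlinarith

theorem pos_mono {A : Lp ℝ p μ →L[ℝ] Lp ℝ p μ} (hA : ∀ f, 0 ≤ f → 0 ≤ A f) {f g : Lp ℝ p μ}
    (h : f ≤ g) : A f ≤ A g := by
  have := hA (g - f) (sub_nonneg.2 h)
  rwa [map_sub, sub_nonneg] at this

theorem abs_pos_op {A : Lp ℝ p μ →L[ℝ] Lp ℝ p μ} (hA : ∀ f, 0 ≤ f → 0 ≤ A f) (f : Lp ℝ p μ) :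
    |A f| ≤ A |f| := by
  rw [abs_le']
  refine ⟨pos_mono hA (le_abs_self f), ?_⟩
  rw [← map_neg]
  exact pos_mono hA (neg_le_abs f)

theorem trotterLp (hp : p ≠ ∞) {T S : ℝ → Lp ℝ p μ →L[ℝ] Lp ℝ p μ} {W : Ω → ℝ} {c : ℝ}
    (hT : IsC0Semigroup T) (hTpos : IsPositiveSG T) (hS : IsPerturbedSG μ p T S W)
    (hWm : LocallyMeasurable μ W) (hW0 : ∀ ω, 0 ≤ W ω) (hWc : ∀ ω, W ω ≤ c) :
    ∃ Q : ℝ → Lp ℝ p μ →L[ℝ] Lp ℝ p μ,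
      (∀ τ, 0 ≤ τ → ∀ f, ⇑(Q τ f) =ᵐ[μ] fun ω => Real.exp (-(τ * W ω)) * f ω) ∧
      ∀ t, 0 ≤ t → ∀ f, Tendsto (fun n : ℕ => ((Q (t / n) * T (t / n)) ^ n) f) atTop
        (𝓝 (S t f)) := by
  obtain ⟨B, hB⟩ := exists_mulOp (p := p) hp hWm (C := c)
    (fun ω => by rw [abs_of_nonneg (hW0 ω)]; exact hWc ω)
  have hexp : ∀ τ, 0 ≤ τ → ∀ ω, Real.exp (-(τ * W ω)) ≤ 1 := fun τ hτ ω =>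
    Real.exp_le_one_iff.2 (by have := mul_nonneg hτ (hW0 ω); linarith)
  have ex : ∀ τ : ℝ, ∃ M : Lp ℝ p μ →L[ℝ] Lp ℝ p μ, 0 ≤ τ →
      ∀ f, ⇑(M f) =ᵐ[μ] fun ω => Real.exp (-(τ * W ω)) * f ω := by
    intro τ
    by_cases hτ : 0 ≤ τ
    · obtain ⟨M, hM⟩ := exists_mulOp (p := p) hp
        (hWm.comp' (φ := fun x => Real.exp (-(τ * x))) (by fun_prop)) (C := 1)
        (fun ω => by rw [abs_of_nonneg (Real.exp_pos _).le]; exact hexp τ hτ ω)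
      exact ⟨M, fun _ => hM⟩
    · exact ⟨0, fun h => absurd h hτ⟩
  choose Q hQ using ex
  refine ⟨Q, hQ, fun t ht f => ?_⟩
  obtain ⟨K, hK, bT⟩ := locBound hT t
  refine trotter (B := B) hT hS.1 ?_ (C := c ^ 2) (by positivity) ?_ ht hK ?_ f
  · intro f g hfg
    obtain ⟨g₀, h1, h2⟩ := (hS.2 f g).1 hfg
    refine ⟨g₀, h1, Lp.ext ?_⟩
    filter_upwards [h2, hB f, Lp.coeFn_sub g₀ (B f)] with ω h3 h4 h5
    rw [h3, h5, Pi.sub_apply, h4]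
  · intro τ hτ g
    refine Lp.norm_le_mul_norm_of_ae_le_mul ?_
    filter_upwards [hQ τ hτ g, hB g, Lp.coeFn_add (Q τ g - g) (τ • B g), Lp.coeFn_sub (Q τ g) g,
      Lp.coeFn_smul τ (B g)] with ω h1 h2 h3 h4 h5
    rw [h3, Pi.add_apply, h4, Pi.sub_apply, h5, Pi.smul_apply, h1, h2]
    have e : Real.exp (-(τ * W ω)) * g ω - g ω + τ • (W ω * g ω) =
        (Real.exp (-(τ * W ω)) - 1 + τ * W ω) * g ω := by simp only [smul_eq_mul]; ring
    rw [e, norm_mul]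
    refine mul_le_mul_of_nonneg_right ?_ (norm_nonneg _)
    refine (exp_quad (mul_nonneg hτ (hW0 ω))).trans ?_
    rw [mul_pow, mul_comm]
    have := hW0 ω
    have := hWc ω
    gcongr
  · intro τ hτ n hn y
    have main : ∀ n : ℕ, |((Q τ * T τ) ^ n) y| ≤ T (n * τ) |y| := by
      intro n
      induction n with
      | zero => simp [hT.1.1]
      | succ n ih =>
        rw [pow_succ', mul_apply_eq_comp]
        set z := ((Q τ * T τ) ^ n) y
        have e1 : |Q τ (T τ z)| ≤ |T τ z| := by
          rw [← Lp.coeFn_le]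
          filter_upwards [hQ τ hτ (T τ z), Lp.coeFn_abs (Q τ (T τ z)), Lp.coeFn_abs (T τ z)]
            with ω h1 h2 h3
          rw [h2, h3, h1, abs_mul, abs_of_nonneg (Real.exp_pos _).le]
          exact mul_le_of_le_one_left (abs_nonneg _) (hexp τ hτ ω)
        have e2 := abs_pos_op (hTpos τ hτ) z
        have e3 := pos_mono (hTpos τ hτ) ih
        have e4 : T τ (T (n * τ) |y|) = T ((n + 1 : ℕ) * τ) |y| := by
          have := hT.1.2 τ (n * τ) hτ (by positivity)
          push_cast
          rw [add_mul, one_mul, add_comm, this]; rfl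
        rw [← e4]
        exact e1.trans (e2.trans e3)
    have h1 := main n
    have h2 : ‖((Q τ * T τ) ^ n) y‖ ≤ ‖T (n * τ) |y|‖ :=
      norm_le_norm_of_abs_le_abs (h1.trans (le_abs_self _))
    refine h2.trans ((ContinuousLinearMap.le_opNorm _ _).trans ?_)
    rw [norm_abs_eq_norm]
    exact mul_le_mul_of_nonneg_right (bT _ (by positivity) hn) (norm_nonneg _)

/-- log-convexity relation -/
def Rel (θ x : ℝ) (g a b : Lp ℝ p μ) : Prop :=
  ∀ s : ℝ, g ≤ Real.exp x • ((θ * Real.exp ((1 - θ) * s)) • a + ((1 - θ) * Real.exp (-(θ * s))) • b)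

theorem rhs_coe (k1 k2 k3 : ℝ) (a b : Lp ℝ p μ) :
    ⇑(k1 • (k2 • a + k3 • b)) =ᵐ[μ] fun ω => k1 * (k2 * a ω + k3 * b ω) := by
  filter_upwards [Lp.coeFn_smul k1 (k2 • a + k3 • b), Lp.coeFn_add (k2 • a) (k3 • b),
    Lp.coeFn_smul k2 a, Lp.coeFn_smul k3 b] with ω h1 h2 h3 h4
  rw [h1, Pi.smul_apply, h2, Pi.add_apply, h3, h4]; simp

theorem Rel.op {θ x : ℝ} {g a b : Lp ℝ p μ} (h : Rel θ x g a b)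
    {A : Lp ℝ p μ →L[ℝ] Lp ℝ p μ} (hA : ∀ f, 0 ≤ f → 0 ≤ A f) : Rel θ x (A g) (A a) (A b) := by
  intro s
  have := pos_mono hA (h s)
  simpa only [map_smul, map_add] using this

theorem Rel.mul {θ x : ℝ} {g a b : Lp ℝ p μ} (h : Rel θ x g a b) (hθ0 : 0 ≤ θ) (hθ1 : θ ≤ 1)
    (ha : 0 ≤ a) (hb : 0 ≤ b) {W W1 W2 : Ω → ℝ} {c τ : ℝ} (hτ : 0 ≤ τ)
    (hW : ∀ ω, θ * W1 ω + (1 - θ) * W2 ω ≤ W ω + c) {g' a' b' : Lp ℝ p μ}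
    (hg' : ⇑g' =ᵐ[μ] fun ω => Real.exp (-(τ * W ω)) * g ω)
    (ha' : ⇑a' =ᵐ[μ] fun ω => Real.exp (-(τ * W1 ω)) * a ω)
    (hb' : ⇑b' =ᵐ[μ] fun ω => Real.exp (-(τ * W2 ω)) * b ω) :
    Rel θ (x + c * τ) g' a' b' := by
  have hae : ∀ᵐ ω ∂μ, ∀ q : ℚ, g ω ≤ Real.exp x * ((θ * Real.exp ((1 - θ) * q)) * a ω +
      ((1 - θ) * Real.exp (-(θ * q))) * b ω) := by
    rw [ae_all_iff]
    intro q
    filter_upwards [(Lp.coeFn_le _ _).2 (h q), rhs_coe (Real.exp x) (θ * Real.exp ((1 - θ) * q))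
      ((1 - θ) * Real.exp (-(θ * q))) a b] with ω h1 h2
    rwa [h2] at h1
  intro s
  rw [← Lp.coeFn_le]
  filter_upwards [hae, hg', ha', hb', (Lp.coeFn_nonneg a).2 ha, (Lp.coeFn_nonneg b).2 hb,
    rhs_coe (Real.exp (x + c * τ)) (θ * Real.exp ((1 - θ) * s))
      ((1 - θ) * Real.exp (-(θ * s))) a' b'] with ω h1 h2 h3 h4 h5 h6 h7
  have h5 : 0 ≤ a ω := h5
  have h6 : 0 ≤ b ω := h6
  have hreal : ∀ r : ℝ, g ω ≤ Real.exp x * ((θ * Real.exp ((1 - θ) * r)) * a ω +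
      ((1 - θ) * Real.exp (-(θ * r))) * b ω) := by
    have hcl : IsClosed {r : ℝ | g ω ≤ Real.exp x * ((θ * Real.exp ((1 - θ) * r)) * a ω +
      ((1 - θ) * Real.exp (-(θ * r))) * b ω)} := isClosed_le (by fun_prop) (by fun_prop)
    intro r
    have := hcl.closure_subset_iff.2 (Set.range_subset_iff.2 h1)
    exact this (Rat.denseRange_cast r)
  rw [h7, h2, h3, h4]
  have k := hreal (s + τ * (W2 ω - W1 ω))
  have k2 := mul_le_mul_of_nonneg_left k (Real.exp_pos (-(τ * W ω))).le
  refine k2.trans ?_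
  have key := mul_le_mul_of_nonneg_left (hW ω) hτ
  have c1 : Real.exp (-(τ * W ω)) * (Real.exp x * Real.exp ((1 - θ) * (s + τ * (W2 ω - W1 ω)))) ≤
      Real.exp (x + c * τ) * Real.exp ((1 - θ) * s) * Real.exp (-(τ * W1 ω)) := by
    simp only [← Real.exp_add]
    apply Real.exp_le_exp.2
    nlinarith
  have c2 : Real.exp (-(τ * W ω)) * (Real.exp x * Real.exp (-(θ * (s + τ * (W2 ω - W1 ω))))) ≤
      Real.exp (x + c * τ) * Real.exp (-(θ * s)) * Real.exp (-(τ * W2 ω)) := by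
    simp only [← Real.exp_add]
    apply Real.exp_le_exp.2
    nlinarith
  have d1 := mul_le_mul_of_nonneg_left c1 (mul_nonneg hθ0 h5)
  have d2 := mul_le_mul_of_nonneg_left c2 (mul_nonneg (sub_nonneg.2 hθ1) h6)
  refine le_trans (le_of_eq ?_) ((add_le_add d1 d2).trans (le_of_eq ?_)) <;> ring

theorem convexity (hp : p ≠ ∞) {T S S1 S2 : ℝ → Lp ℝ p μ →L[ℝ] Lp ℝ p μ} {W W1 W2 : Ω → ℝ}
    {C C1 C2 : ℝ}
    (hT : IsC0Semigroup T) (hTpos : IsPositiveSG T) (hS : IsPerturbedSG μ p T S W)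
    (hS1 : IsPerturbedSG μ p T S1 W1) (hS2 : IsPerturbedSG μ p T S2 W2)
    (hWm : LocallyMeasurable μ W) (hW0 : ∀ ω, 0 ≤ W ω) (hWc : ∀ ω, W ω ≤ C)
    (hWm1 : LocallyMeasurable μ W1) (hW01 : ∀ ω, 0 ≤ W1 ω) (hWc1 : ∀ ω, W1 ω ≤ C1)
    (hWm2 : LocallyMeasurable μ W2) (hW02 : ∀ ω, 0 ≤ W2 ω) (hWc2 : ∀ ω, W2 ω ≤ C2)
    {θ c : ℝ} (hθ0 : 0 ≤ θ) (hθ1 : θ ≤ 1)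
    (hW : ∀ ω, θ * W1 ω + (1 - θ) * W2 ω ≤ W ω + c) {t : ℝ} (ht : 0 ≤ t) {f : Lp ℝ p μ}
    (hf : 0 ≤ f) :
    S t f ≤ Real.exp (c * t) • (θ • S1 t f + (1 - θ) • S2 t f) := by
  obtain ⟨Q, hQ, lim⟩ := trotterLp hp hT hTpos hS hWm hW0 hWc
  obtain ⟨Q1, hQ1, lim1⟩ := trotterLp hp hT hTpos hS1 hWm1 hW01 hWc1
  obtain ⟨Q2, hQ2, lim2⟩ := trotterLp hp hT hTpos hS2 hWm2 hW02 hWc2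
  have qpos : ∀ (τ : ℝ) (w : Ω → ℝ) (M : Lp ℝ p μ →L[ℝ] Lp ℝ p μ),
      (∀ f, ⇑(M f) =ᵐ[μ] fun ω => Real.exp (-(τ * w ω)) * f ω) → ∀ f, 0 ≤ f → 0 ≤ M f := by
    intro τ w M hM f hf
    rw [← Lp.coeFn_nonneg]
    filter_upwards [hM f, (Lp.coeFn_nonneg f).2 hf] with ω h1 h2
    rw [h1]
    exact mul_nonneg (Real.exp_pos _).le h2
  have main : ∀ τ, 0 ≤ τ → ∀ n : ℕ, Rel θ (c * (n * τ)) (((Q τ * T τ) ^ n) f)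
      (((Q1 τ * T τ) ^ n) f) (((Q2 τ * T τ) ^ n) f) ∧ 0 ≤ (((Q1 τ * T τ) ^ n) f) ∧
      0 ≤ (((Q2 τ * T τ) ^ n) f) := by
    intro τ hτ n
    induction n with
    | zero =>
      refine ⟨fun s => ?_, by simpa using hf, by simpa using hf⟩
      simp only [pow_zero, one_apply_eq_self, Nat.cast_zero, zero_mul, mul_zero, Real.exp_zero,
        one_smul, ← add_smul]
      have e1 := mul_le_mul_of_nonneg_left (Real.add_one_le_exp ((1 - θ) * s)) hθ0
      have e2 := mul_le_mul_of_nonneg_left (Real.add_one_le_exp (-(θ * s))) (sub_nonneg.2 hθ1)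
      have e3 : 1 ≤ θ * Real.exp ((1 - θ) * s) + (1 - θ) * Real.exp (-(θ * s)) := by
        nlinarith
      rw [← Lp.coeFn_le]
      filter_upwards [(Lp.coeFn_nonneg f).2 hf,
        Lp.coeFn_smul (θ * Real.exp ((1 - θ) * s) + (1 - θ) * Real.exp (-(θ * s))) f] with ω h1 h2
      rw [h2, Pi.smul_apply, smul_eq_mul]
      exact le_mul_of_one_le_left h1 e3
    | succ n ih =>
      obtain ⟨i1, i2, i3⟩ := ih
      rw [pow_succ', pow_succ', pow_succ', mul_apply_eq_comp, mul_apply_eq_comp, mul_apply_eq_comp,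
        mul_apply_eq_comp, mul_apply_eq_comp, mul_apply_eq_comp]
      have p1 := hTpos τ hτ _ i2
      have p2 := hTpos τ hτ _ i3
      refine ⟨?_, qpos τ W1 _ (hQ1 τ hτ) _ p1, qpos τ W2 _ (hQ2 τ hτ) _ p2⟩
      have e : c * ((n + 1 : ℕ) * τ) = c * (n * τ) + c * τ := by push_cast; ring
      rw [e]
      exact (i1.op (hTpos τ hτ)).mul hθ0 hθ1 p1 p2 hτ hW (hQ τ hτ _) (hQ1 τ hτ _) (hQ2 τ hτ _)
  refine le_of_tendsto_of_tendsto (lim t ht f)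
    ((((lim1 t ht f).const_smul θ).add ((lim2 t ht f).const_smul (1 - θ))).const_smul
      (Real.exp (c * t))) ?_
  filter_upwards [eventually_ge_atTop 1] with n hn
  have hnpos : (0:ℝ) < n := by exact_mod_cast hn
  have := (main (t / n) (by positivity) n).1 0
  have e : (n:ℝ) * (t / n) = t := by field_simp
  simpa [e] using this

end LpPart

section Final

variable {μ : Measure Ω}

theorem trunc_nonneg (V : Ω → ℝ≥0∞) (n : ℕ) (ω : Ω) : 0 ≤ trunc V n ω := ENNReal.toReal_nonneg

theorem trunc_le (V : Ω → ℝ≥0∞) (n : ℕ) (ω : Ω) : trunc V n ω ≤ n := by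
  have : (min (V ω) (n : ℝ≥0∞)).toReal ≤ ((n : ℝ≥0∞)).toReal :=
    ENNReal.toReal_mono (by simp) (min_le_right _ _)
  simpa [trunc] using this

theorem trunc_smul_lm {V : Ω → ℝ≥0∞} (hV : LocallyMeasurable μ V) (ε : ℝ) (n : ℕ) :
    LocallyMeasurable μ (trunc (smulRate ε V) n) :=
  hV.comp' (φ := fun v => (min (ENNReal.ofReal ε * v) (n : ℝ≥0∞)).toReal) (by fun_prop)

theorem trunc_resid_lm {V : Ω → ℝ≥0∞} (hV : LocallyMeasurable μ V) (n k : ℕ) :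
    LocallyMeasurable μ (trunc (resid V n) k) :=
  hV.comp' (φ := fun v => (min (v - min v (n : ℝ≥0∞)) (k : ℝ≥0∞)).toReal) (by fun_prop)

theorem trunc_smul_top {V : Ω → ℝ≥0∞} {ε : ℝ} (hε : 0 < ε) (n : ℕ) {ω : Ω} (h : V ω = ∞) :
    trunc (smulRate ε V) n ω = n := by
  simp [trunc, smulRate, h, ENNReal.mul_top, hε]

theorem trunc_resid_top {V : Ω → ℝ≥0∞} (n k : ℕ) {ω : Ω} (h : V ω = ∞) :
    trunc (resid V n) k ω = k := by
  simp [trunc, resid, h]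

theorem trunc_smul_fin {V : Ω → ℝ≥0∞} {ε : ℝ} (hε : 0 < ε) (n : ℕ) {ω : Ω} (h : V ω ≠ ∞) :
    trunc (smulRate ε V) n ω = min (ε * (V ω).toReal) n := by
  have h1 : ENNReal.ofReal ε * V ω ≠ ∞ := ENNReal.mul_ne_top (by simp) h
  simp only [trunc, smulRate]
  rw [ENNReal.toReal_min h1 (by simp), ENNReal.toReal_mul, ENNReal.toReal_ofReal hε.le]
  simp

theorem trunc_resid_fin {V : Ω → ℝ≥0∞} (n k : ℕ) {ω : Ω} (h : V ω ≠ ∞) :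
    trunc (resid V n) k ω = min ((V ω).toReal - min (V ω).toReal n) k := by
  have h1 : V ω - min (V ω) (n : ℝ≥0∞) ≠ ∞ := ENNReal.sub_ne_top h
  simp only [trunc, resid]
  rw [ENNReal.toReal_min h1 (by simp), ENNReal.toReal_sub_of_le (min_le_left _ _) h,
    ENNReal.toReal_min h (by simp)]
  simp

theorem ineq1 (V : Ω → ℝ≥0∞) {ε : ℝ} (hε : 0 < ε) (hε1 : ε ≤ 1) {n k m : ℕ} (hk : m ≤ k) (ω : Ω) :
    trunc (smulRate ε V) m ω ≤ trunc (resid V n) k ω + ε * n := by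
  have hk' : (m:ℝ) ≤ k := by exact_mod_cast hk
  have hn : (0:ℝ) ≤ n := by positivity
  have hεn : 0 ≤ ε * n := by positivity
  by_cases h : V ω = ∞
  · rw [trunc_smul_top hε _ h, trunc_resid_top _ _ h]; linarith
  · rw [trunc_smul_fin hε _ h, trunc_resid_fin _ _ h]
    have hv : 0 ≤ (V ω).toReal := ENNReal.toReal_nonneg
    generalize (V ω).toReal = v at hv
    rw [← min_add_add_right]
    refine le_min ?_ ?_
    · refine (min_le_left _ _).trans ?_
      rcases le_total v n with hvn | hvn
      · rw [min_eq_left hvn]; nlinarith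
      · rw [min_eq_right hvn]; nlinarith
    · exact (min_le_right _ _).trans (by linarith)

theorem ineq2 (V : Ω → ℝ≥0∞) {ε : ℝ} (hε : 0 < ε) (hε1 : ε ≤ 1) {n k m N : ℕ}
    (hm : (m:ℝ) ≤ ε * n) (hN : k + n ≤ N) (ω : Ω) :
    ε * trunc (resid V n) k ω + (1 - ε) * trunc (smulRate ε V) m ω
      ≤ trunc (smulRate ε V) N ω + 0 := by
  have hN' : (k:ℝ) + n ≤ N := by exact_mod_cast hN
  have hn : (0:ℝ) ≤ n := by positivity
  have hk0 : (0:ℝ) ≤ k := by positivity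
  have hm0 : (0:ℝ) ≤ m := by positivity
  have b : ε * (k:ℝ) + (1 - ε) * m ≤ N := by nlinarith
  rw [add_zero]
  by_cases h : V ω = ∞
  · rw [trunc_smul_top hε _ h, trunc_smul_top hε _ h, trunc_resid_top _ _ h]
    exact b
  · rw [trunc_smul_fin hε _ h, trunc_smul_fin hε _ h, trunc_resid_fin _ _ h]
    have hv : 0 ≤ (V ω).toReal := ENNReal.toReal_nonneg
    generalize (V ω).toReal = v at hv
    have x1 : min (v - min v n) (k:ℝ) ≤ k := min_le_right _ _
    have x2 : min (v - min v n) (k:ℝ) ≤ v - min v n := min_le_left _ _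
    have y1 : min (ε * v) (m:ℝ) ≤ m := min_le_right _ _
    have y2 : min (ε * v) (m:ℝ) ≤ ε * v := min_le_left _ _
    have x1' := mul_le_mul_of_nonneg_left x1 hε.le
    have x2' := mul_le_mul_of_nonneg_left x2 hε.le
    have y1' := mul_le_mul_of_nonneg_left y1 (sub_nonneg.2 hε1)
    have y2' := mul_le_mul_of_nonneg_left y2 (sub_nonneg.2 hε1)
    refine le_min ?_ (by linarith)
    rcases le_total v n with hvn | hvn
    · rw [min_eq_left hvn] at x2' ⊢
      have : 0 ≤ ε * (ε * v) := by positivity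
      linarith
    · rw [min_eq_right hvn] at x2' ⊢
      have : (1 - ε) * (m:ℝ) ≤ m := by nlinarith
      linarith

end Final

end Absorption

open Absorption
/-- For a `T`-admissible `V : Ω → [0,∞]`, the two strong limits
`T_{0,V} = s-lim_{ε→0+} T_{εV}` and `(T_V)_{−V} = s-lim_{n→∞} T_{V−V∧n}` coincide. -/
theorem statement0
    {Ω : Type*} [MeasurableSpace Ω] (μ : Measure Ω) (p : ℝ≥0∞) [Fact (1 ≤ p)] (hp : p ≠ ∞)
    (T : ℝ → Lp ℝ p μ →L[ℝ] Lp ℝ p μ)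
    (hT : IsC0Semigroup T) (hTpos : IsPositiveSG T)
    (V : Ω → ℝ≥0∞) (hV : Admissible μ p T V)
    -- the absorption semigroups `T_{εV}` for `ε ∈ (0,1]`
    (Sε : ℝ → ℝ → Lp ℝ p μ →L[ℝ] Lp ℝ p μ)
    (hSε : ∀ ε : ℝ, 0 < ε → ε ≤ 1 → IsAbsorptionSG μ p T (smulRate ε V) (Sε ε))
    -- the absorption semigroups `T_{V − V∧n}`
    (R : ℕ → ℝ → Lp ℝ p μ →L[ℝ] Lp ℝ p μ)
    (hR : ∀ n : ℕ, IsAbsorptionSG μ p T (resid V n) (R n))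
    -- `T_{0,V} = s-lim_{ε→0+} T_{εV}` and `(T_V)_{−V} = s-lim_{n→∞} T_{V−V∧n}`
    (L₁ L₂ : ℝ → Lp ℝ p μ →L[ℝ] Lp ℝ p μ)
    (hL₁ : ∀ t : ℝ, 0 ≤ t → ∀ f : Lp ℝ p μ,
      Tendsto (fun ε : ℝ => Sε ε t f) (𝓝[>] (0 : ℝ)) (𝓝 (L₁ t f)))
    (hL₂ : ∀ t : ℝ, 0 ≤ t → ∀ f : Lp ℝ p μ,
      Tendsto (fun n : ℕ => R n t f) atTop (𝓝 (L₂ t f))) :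
    ∀ t : ℝ, 0 ≤ t → L₁ t = L₂ t := by
  obtain ⟨hVm, -⟩ := hV
  have hle1 : ∀ t : ℝ, 0 ≤ t → ∀ f : Lp ℝ p μ, 0 ≤ f → L₂ t f ≤ L₁ t f := by
    intro t ht f hf
    refine le_of_tendsto' (hL₂ t ht f) fun n => ?_
    obtain ⟨RS, hRS, limR⟩ := hR n
    have hexp : Tendsto (fun ε : ℝ => Real.exp (ε * n * t) • Sε ε t f) (𝓝[>] (0 : ℝ))
        (𝓝 (L₁ t f)) := by
      have h1 : Tendsto (fun ε : ℝ => Real.exp (ε * n * t)) (𝓝[>] (0 : ℝ)) (𝓝 1) := by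
        have : Continuous (fun ε : ℝ => Real.exp (ε * n * t)) := by fun_prop
        have h2 := this.tendsto 0
        simp only [zero_mul, Real.exp_zero] at h2
        exact h2.mono_left nhdsWithin_le_nhds
      simpa using h1.smul (hL₁ t ht f)
    refine ge_of_tendsto hexp ?_
    have hle : ∀ᶠ ε : ℝ in 𝓝[>] (0:ℝ), ε ≤ 1 :=
      nhdsWithin_le_nhds (Iic_mem_nhds (by norm_num))
    filter_upwards [self_mem_nhdsWithin, hle] with ε hε hε1
    have hε : 0 < ε := hε
    obtain ⟨SS, hSS, limS⟩ := hSε ε hε hε1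
    refine ge_of_tendsto' ((limS t ht f).const_smul (Real.exp (ε * n * t))) fun m => ?_
    refine le_of_tendsto (limR t ht f) ?_
    filter_upwards [eventually_ge_atTop m] with k hk
    have := convexity hp hT hTpos (hRS k) (hSS m) (hSS m) (trunc_resid_lm hVm n k)
      (trunc_nonneg _ _) (trunc_le _ _) (trunc_smul_lm hVm ε m) (trunc_nonneg _ _) (trunc_le _ _)
      (trunc_smul_lm hVm ε m) (trunc_nonneg _ _) (trunc_le _ _) (θ := 1) (c := ε * n)
      (by norm_num) (by norm_num) (fun ω => by simpa using ineq1 V hε hε1 hk ω) ht hf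
    simpa using this
  have hle2 : ∀ t : ℝ, 0 ≤ t → ∀ f : Lp ℝ p μ, 0 ≤ f → L₁ t f ≤ L₂ t f := by
    intro t ht f hf
    refine le_of_tendsto (hL₁ t ht f) ?_
    have hle : ∀ᶠ ε : ℝ in 𝓝[>] (0:ℝ), ε ≤ 1 :=
      nhdsWithin_le_nhds (Iic_mem_nhds (by norm_num))
    filter_upwards [self_mem_nhdsWithin, hle] with ε hε hε1
    have hε : 0 < ε := hε
    obtain ⟨SS, hSS, limS⟩ := hSε ε hε hε1
    have key : Sε ε t f ≤ ε • L₂ t f + (1 - ε) • Sε ε t f := by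
      refine ge_of_tendsto' (((limS t ht f).const_smul (1 - ε)).const_add (ε • L₂ t f))
        fun m => ?_
      refine ge_of_tendsto (((hL₂ t ht f).const_smul ε).add_const ((1 - ε) • SS m t f)) ?_
      obtain ⟨n0, hn0⟩ := exists_nat_ge ((m:ℝ) / ε)
      filter_upwards [eventually_ge_atTop n0] with n hn
      have hmn : (m:ℝ) ≤ ε * n := by
        have h1 : (n0:ℝ) ≤ n := by exact_mod_cast hn
        have h2 := hn0.trans h1
        rw [div_le_iff₀ hε] at h2
        linarith
      obtain ⟨RS, hRS, limR⟩ := hR n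
      refine ge_of_tendsto' (((limR t ht f).const_smul ε).add_const ((1 - ε) • SS m t f))
        fun k => ?_
      refine le_of_tendsto (limS t ht f) ?_
      filter_upwards [eventually_ge_atTop (k + n)] with N hN
      have := convexity hp hT hTpos (hSS N) (hRS k) (hSS m) (trunc_smul_lm hVm ε N)
        (trunc_nonneg _ _) (trunc_le _ _) (trunc_resid_lm hVm n k) (trunc_nonneg _ _)
        (trunc_le _ _) (trunc_smul_lm hVm ε m) (trunc_nonneg _ _) (trunc_le _ _) (θ := ε) (c := 0)
        hε.le hε1 (ineq2 V hε hε1 hmn hN) ht hf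
      simpa using this
    rw [← Lp.coeFn_le] at key ⊢
    filter_upwards [key, rhs_coe 1 ε (1 - ε) (L₂ t f) (Sε ε t f)] with ω h1 h2
    rw [one_smul] at h2
    rw [h2] at h1
    have h3 : ε * Sε ε t f ω ≤ ε * L₂ t f ω := by linarith
    exact le_of_mul_le_mul_left h3 hε
  intro t ht
  ext1 f
  have e : f = f ⊔ 0 - (-f) ⊔ 0 := (posPart_sub_negPart f).symm
  rw [e, map_sub, map_sub]
  rw [le_antisymm (hle2 t ht (f ⊔ 0) le_sup_right) (hle1 t ht (f ⊔ 0) le_sup_right),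
    le_antisymm (hle2 t ht (-f ⊔ 0) le_sup_right) (hle1 t ht (-f ⊔ 0) le_sup_right)]
end
end

section
/- Let (Ω, 𝒜, μ) be a measure space, p ∈ [1,∞), and T a positive C₀-semigroup on L_p(μ) with generator A. A T-admissible absorption rate V : Ω → [0,∞] is T-regular if and only if V is strongly T-regular. -/
open MeasureTheory Filter Topology ENNReal

noncomputable section

open Absorption

namespace AbsProof

set_option linter.unusedSectionVars false

section abstractSG

variable {E : Type*} [NormedAddCommGroup E] [NormedSpace ℝ E] [CompleteSpace E]

theorem sg_bound {T : ℝ → E →L[ℝ] E} (hT : IsC0Semigroup T) (b : ℝ) :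
    ∃ M : ℝ, 0 ≤ M ∧ ∀ s, 0 ≤ s → s ≤ b → ‖T s‖ ≤ M := by
  have h : ∀ x : E, ∃ C, ∀ i : Set.Icc (0 : ℝ) b, ‖T i x‖ ≤ C := by
    intro x
    have hc : ContinuousOn (fun t => T t x) (Set.Icc 0 b) :=
      (hT.2 x).mono (fun s hs => hs.1)
    obtain ⟨C, hC⟩ := isCompact_Icc.exists_bound_of_continuousOn hc
    exact ⟨C, fun i => hC i i.2⟩
  obtain ⟨C, hC⟩ := banach_steinhaus h
  refine ⟨max C 0, le_max_right _ _, fun s hs hb => ?_⟩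
  exact (hC ⟨s, hs, hb⟩).trans (le_max_left _ _)

/-- joint continuity -/
theorem sg_tendsto {ι : Type*} {l : Filter ι} {T : ℝ → E →L[ℝ] E} (hT : IsC0Semigroup T)
    {b : ℝ} {τ : ι → ℝ} {x : ι → E} {t : ℝ} {y : E}
    (hτ : ∀ᶠ i in l, 0 ≤ τ i ∧ τ i ≤ b) (ht : 0 ≤ t)
    (hτt : Tendsto τ l (𝓝 t)) (hx : Tendsto x l (𝓝 y)) :
    Tendsto (fun i => T (τ i) (x i)) l (𝓝 (T t y)) := by
  obtain ⟨M, hM0, hM⟩ := sg_bound hT b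
  have h1 : Tendsto (fun i => T (τ i) y) l (𝓝 (T t y)) := by
    have := (hT.2 y) t ht
    refine this.tendsto.comp ?_
    rw [tendsto_nhdsWithin_iff]
    exact ⟨hτt, hτ.mono fun i hi => hi.1⟩
  have h2 : Tendsto (fun i => T (τ i) (x i - y)) l (𝓝 0) := by
    have h3 : Tendsto (fun i => M * ‖x i - y‖) l (𝓝 0) := by
      have := (tendsto_iff_norm_sub_tendsto_zero.1 hx).const_mul M
      simpa using this
    refine squeeze_zero_norm' ?_ h3
    filter_upwards [hτ] with i hi
    exact (T (τ i)).le_of_opNorm_le (hM _ hi.1 hi.2) _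
  have := h1.add h2
  simp only [add_zero] at this
  refine this.congr fun i => ?_
  rw [← map_add]; congr 1; abel

theorem sg_continuousOn {T : ℝ → E →L[ℝ] E} (hT : IsC0Semigroup T) {t : ℝ}
    {y : ℝ → E} (hy : ContinuousOn y (Set.Icc 0 t)) :
    ContinuousOn (fun s => T (t - s) (y s)) (Set.Icc 0 t) := by
  intro s hs
  refine sg_tendsto hT (b := t) ?_ (by linarith [hs.2]) ?_ (hy s hs)
  · filter_upwards [self_mem_nhdsWithin] with r hr
    exact ⟨by linarith [hr.2], by linarith [hr.1]⟩
  · exact ((continuous_const.sub continuous_id).tendsto s).mono_left nhdsWithin_le_nhds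

theorem gen_invariant {T : ℝ → E →L[ℝ] E} (hT : IsC0Semigroup T) {f g : E}
    (h : InGenerator T f g) {s : ℝ} (hs : 0 ≤ s) : InGenerator T (T s f) (T s g) := by
  unfold InGenerator at *
  have := ((T s).continuous.tendsto g).comp h
  refine this.congr' ?_
  filter_upwards [self_mem_nhdsWithin] with r hr
  have hr0 : (0 : ℝ) ≤ r := le_of_lt hr
  have e : T r (T s f) = T s (T r f) := by
    have h1 := hT.1.2 r s hr0 hs
    have h2 := hT.1.2 s r hs hr0
    rw [add_comm] at h2
    rw [h1] at h2
    exact DFunLike.congr_fun h2 f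
  simp [e]

theorem gen_dense {T : ℝ → E →L[ℝ] E} (hT : IsC0Semigroup T) (f : E) :
    f ∈ closure {f : E | ∃ g, InGenerator T f g} := by
  set u : ℝ → E := fun s => T (max s 0) f with hu
  have huc : Continuous u := by
    have : ContinuousOn (fun t => T t f) (Set.Ici 0) := hT.2 f
    exact this.comp_continuous (by fun_prop) (fun x => Set.mem_Ici.2 (le_max_right _ _))
  have hu0 : u 0 = f := by simp [hu, hT.1.1]
  set F : ℝ → E := fun x => ∫ s in (0 : ℝ)..x, u s with hF
  have hFd : ∀ x, HasDerivAt F (u x) x := fun x =>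
    intervalIntegral.integral_hasDerivAt_right (huc.intervalIntegrable _ _)
      (huc.stronglyMeasurableAtFilter _ _) huc.continuousAt
  have hF0 : F 0 = 0 := by simp [hF]
  have key : ∀ x, 0 ≤ x → InGenerator T (F x) (u x - f) := by
    intro x hx
    unfold InGenerator
    have e : ∀ r, 0 ≤ r → T r (F x) = F (x + r) - F r := by
      intro r hr
      have h1 : T r (F x) = ∫ s in (0 : ℝ)..x, T r (u s) :=
        ((T r).intervalIntegral_comp_comm (huc.intervalIntegrable _ _)).symm
      have h2 : ∫ s in (0 : ℝ)..x, T r (u s) = ∫ s in (0 : ℝ)..x, u (s + r) := by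
        refine intervalIntegral.integral_congr fun s hs => ?_
        rw [Set.uIcc_of_le hx] at hs
        simp only [hu]
        rw [max_eq_left hs.1, max_eq_left (add_nonneg hs.1 hr), add_comm s r,
          hT.1.2 r s hr hs.1]
        rfl
      rw [h1, h2, intervalIntegral.integral_comp_add_right, zero_add]
      simp only [hF]
      rw [intervalIntegral.integral_interval_sub_left (huc.intervalIntegrable _ _)
        (huc.intervalIntegrable _ _)]
    have d1 : Tendsto (fun r => r⁻¹ • (F (x + r) - F x)) (𝓝[>] (0 : ℝ)) (𝓝 (u x)) :=
      (hFd x).tendsto_slope_zero_right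
    have d2 : Tendsto (fun r => r⁻¹ • (F (0 + r) - F 0)) (𝓝[>] (0 : ℝ)) (𝓝 (u 0)) :=
      (hFd 0).tendsto_slope_zero_right
    have d := d1.sub d2
    rw [hu0] at d
    refine d.congr' ?_
    filter_upwards [self_mem_nhdsWithin] with r hr
    rw [e r (le_of_lt hr), hF0, zero_add, ← smul_sub]
    congr 1; abel
  have d2 : Tendsto (fun r => r⁻¹ • (F (0 + r) - F 0)) (𝓝[>] (0 : ℝ)) (𝓝 (u 0)) :=
    (hFd 0).tendsto_slope_zero_right
  rw [hu0] at d2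
  refine mem_closure_of_tendsto d2 ?_
  filter_upwards [self_mem_nhdsWithin] with r hr
  refine ⟨r⁻¹ • (u r - f), ?_⟩
  have := key r (le_of_lt hr)
  unfold InGenerator at *
  rw [hF0, zero_add, sub_zero]
  have := this.const_smul r⁻¹
  refine this.congr fun s => ?_
  rw [map_smul, ← smul_sub, smul_comm]

theorem duhamel {S1 S2 : ℝ → E →L[ℝ] E} (h1 : IsC0Semigroup S1) (h2 : IsC0Semigroup S2)
    (B : E →L[ℝ] E) (hB : ∀ f g, InGenerator S2 f g → InGenerator S1 f (g + B f))
    {t : ℝ} (ht : 0 ≤ t) (f : E) :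
    S1 t f - S2 t f = ∫ s in (0 : ℝ)..t, S1 (t - s) (B (S2 s f)) := by
  have hcB : ∀ f : E, ContinuousOn (fun s => S1 (t - s) (B (S2 s f))) (Set.Icc 0 t) := fun f =>
    sg_continuousOn h1 (B.continuous.comp_continuousOn ((h2.2 f).mono fun s hs => hs.1))
  have hint : ∀ f : E, IntervalIntegrable (fun s => S1 (t - s) (B (S2 s f))) volume 0 t := by
    intro f
    refine ContinuousOn.intervalIntegrable ?_
    rw [Set.uIcc_of_le ht]; exact hcB f
  -- on the domain
  have hdom : ∀ f g, InGenerator S2 f g →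
      S1 t f - S2 t f = ∫ s in (0 : ℝ)..t, S1 (t - s) (B (S2 s f)) := by
    intro f g hfg
    have hc : ContinuousOn (fun s => S1 (t - s) (S2 s f)) (Set.Icc 0 t) :=
      sg_continuousOn h1 ((h2.2 f).mono fun s hs => hs.1)
    have := intervalIntegral.integral_eq_sub_of_hasDeriv_right_of_le (f := fun s => S1 (t - s) (S2 s f))
      (f' := fun s => -(S1 (t - s) (B (S2 s f)))) ht hc ?_ (hint f).neg
    · rw [intervalIntegral.integral_neg] at this
      simp only [sub_self, sub_zero, h1.1.1, h2.1.1, ContinuousLinearMap.id_apply] at this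
      rw [← neg_inj, this]; abel
    · intro x hx
      have g2 := gen_invariant h2 hfg hx.1.le
      have g1 := hB _ _ g2
      rw [hasDerivWithinAt_iff_tendsto_slope' (by simp)]
      have hmap : Tendsto (fun y : ℝ => y - x) (𝓝[>] x) (𝓝[>] 0) := by
        rw [tendsto_nhdsWithin_iff]
        constructor
        · have : Tendsto (fun y : ℝ => y - x) (𝓝 x) (𝓝 (x - x)) :=
            (continuous_id.sub continuous_const).tendsto x
          rw [sub_self] at this
          exact this.mono_left nhdsWithin_le_nhds
        · filter_upwards [self_mem_nhdsWithin] with y hy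
          simpa using hy
      have hq := (g2.sub g1).comp hmap
      have hlim : S2 x g - (S2 x g + B (S2 x f)) = - B (S2 x f) := by abel
      rw [hlim] at hq
      have hnear : ∀ᶠ y in 𝓝[>] x, x < y ∧ y < t := by
        filter_upwards [Ioo_mem_nhdsGT hx.2] with y hy
        exact hy
      have := sg_tendsto h1 (b := t) (τ := fun y => t - y) (l := 𝓝[>] x) (t := t - x) (hnear.mono fun y hy =>
        ⟨by linarith [hy.2], by linarith [hy.1, hx.1]⟩) (by linarith [hx.2])
        (((continuous_const.sub continuous_id).tendsto x).mono_left nhdsWithin_le_nhds) hq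
      rw [map_neg] at this
      refine this.congr' ?_
      filter_upwards [hnear] with y hy
      rw [slope_def_module]
      simp only [Function.comp]
      rw [← smul_sub, map_smul]
      congr 1
      have e2 : S2 y f = S2 (y - x) (S2 x f) := by
        have := h2.1.2 (y - x) x (by linarith [hy.1]) hx.1.le
        rw [sub_add_cancel] at this
        rw [this]; rfl
      have e1 : S1 (t - x) = (S1 (t - y)).comp (S1 (y - x)) := by
        have := h1.1.2 (t - y) (y - x) (by linarith [hy.2]) (by linarith [hy.1])
        rw [← this]; congr 1; ring
      rw [e2, e1]
      simp only [ContinuousLinearMap.comp_apply, map_sub]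
      abel
  -- density
  obtain ⟨M1, hM10, hM1⟩ := sg_bound h1 t
  obtain ⟨M2, hM20, hM2⟩ := sg_bound h2 t
  have hlip : Continuous (fun f : E => ∫ s in (0 : ℝ)..t, S1 (t - s) (B (S2 s f))) := by
    let L : E →ₗ[ℝ] E :=
      { toFun := fun f => ∫ s in (0 : ℝ)..t, S1 (t - s) (B (S2 s f))
        map_add' := fun a b => by
          rw [← intervalIntegral.integral_add (hint a) (hint b)]
          simp
        map_smul' := fun c a => by
          rw [RingHom.id_apply, ← intervalIntegral.integral_smul]
          simp }
    refine (L.mkContinuous (M1 * (‖B‖ * M2) * t) fun f => ?_).continuous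
    have := intervalIntegral.norm_integral_le_of_norm_le_const (a := 0) (b := t)
      (f := fun s => S1 (t - s) (B (S2 s f))) (C := M1 * (‖B‖ * (M2 * ‖f‖))) ?_
    · rw [sub_zero, abs_of_nonneg ht] at this
      refine this.trans (le_of_eq (by ring))
    · intro s hs
      rw [Set.uIoc_of_le ht] at hs
      refine (S1 (t - s)).le_of_opNorm_le_of_le (hM1 _ (by linarith [hs.2]) (by linarith [hs.1])) ?_
      refine B.le_opNorm_of_le ?_
      exact (S2 s).le_of_opNorm_le (hM2 _ hs.1.le hs.2) f
  have hcl : IsClosed {f : E | S1 t f - S2 t f = ∫ s in (0 : ℝ)..t, S1 (t - s) (B (S2 s f))} :=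
    isClosed_eq (by fun_prop) hlip
  have hsub : {f : E | ∃ g, InGenerator S2 f g} ⊆
      {f : E | S1 t f - S2 t f = ∫ s in (0 : ℝ)..t, S1 (t - s) (B (S2 s f))} := by
    rintro f ⟨g, hg⟩
    exact hdom f g hg
  exact closure_minimal hsub hcl (gen_dense h2 f)

theorem rescale_c0 {T : ℝ → E →L[ℝ] E} (hT : IsC0Semigroup T) (c : ℝ) :
    IsC0Semigroup (fun t => Real.exp (-(c * t)) • T t) := by
  refine ⟨⟨by simp [hT.1.1], ?_⟩, ?_⟩
  · intro s t hs ht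
    ext f
    simp only [smul_apply, ContinuousLinearMap.comp_apply, map_smul,
      hT.1.2 s t hs ht, smul_smul, ← Real.exp_add]
    congr 2; ring
  · intro f
    have := hT.2 f
    simp only [smul_apply]
    refine ContinuousOn.smul (by fun_prop) this

theorem rescale_gen {T : ℝ → E →L[ℝ] E} (c : ℝ) {f g : E}
    (h : InGenerator T f g) :
    InGenerator (fun t => Real.exp (-(c * t)) • T t) f (g - c • f) := by
  unfold InGenerator at *
  have hd : HasDerivAt (fun t : ℝ => Real.exp (-(c * t))) (-c) 0 := by
    have h1 : HasDerivAt (fun t : ℝ => -(c * t)) (-c) 0 := by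
      simpa using (hasDerivAt_id (0 : ℝ)).const_mul (-c)
    have := h1.exp
    simpa using this
  have h1 := hd.tendsto_slope_zero_right
  simp only [zero_add, mul_zero, neg_zero, Real.exp_zero, smul_eq_mul] at h1
  have h2 : Tendsto (fun t : ℝ => Real.exp (-(c * t))) (𝓝[>] 0) (𝓝 1) := by
    have : Tendsto (fun t : ℝ => Real.exp (-(c * t))) (𝓝 0) (𝓝 (Real.exp (-(c * 0)))) :=
      Continuous.tendsto (by fun_prop) 0
    simp only [mul_zero, neg_zero, Real.exp_zero] at this
    exact this.mono_left nhdsWithin_le_nhds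
  have := (h2.smul h).add (h1.smul_const f)
  rw [one_smul, neg_smul, ← sub_eq_add_neg] at this
  refine this.congr fun t => ?_
  simp only [smul_apply]
  module

end abstractSG

section lpfacts

variable {Ω : Type*} [MeasurableSpace Ω] {μ : Measure Ω} {p : ℝ≥0∞} [Fact (1 ≤ p)]

instance lpOrderedModule : IsOrderedModule ℝ (Lp ℝ p μ) := by
  have key : ∀ (a : ℝ) (f : Lp ℝ p μ), 0 ≤ a → 0 ≤ f → 0 ≤ a • f := by
    intro a f ha hf
    rw [← Lp.coeFn_nonneg] at hf ⊢
    filter_upwards [hf, Lp.coeFn_smul a f] with x hx hs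
    rw [hs]
    exact mul_nonneg ha hx
  exact
    { smul_le_smul_of_nonneg_left := fun a ha f g hfg => by
        rw [← sub_nonneg, ← smul_sub]
        exact key _ _ ha (sub_nonneg.2 hfg)
      smul_le_smul_of_nonneg_right := fun f hf a b hab => by
        rw [← sub_nonneg, ← sub_smul]
        exact key _ _ (sub_nonneg.2 hab) hf }

theorem ii_mono {t : ℝ} (ht : 0 ≤ t) {F G : ℝ → Lp ℝ p μ}
    (hF : IntervalIntegrable F volume 0 t) (hG : IntervalIntegrable G volume 0 t)
    (h : ∀ s, 0 ≤ s → s ≤ t → F s ≤ G s) :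
    ∫ s in (0 : ℝ)..t, F s ≤ ∫ s in (0 : ℝ)..t, G s := by
  rw [intervalIntegral.integral_of_le ht, intervalIntegral.integral_of_le ht]
  refine integral_mono_ae hF.1 hG.1 ?_
  refine ae_restrict_of_forall_mem measurableSet_Ioc fun s hs => h s hs.1.le hs.2

theorem ii_nonneg {t : ℝ} (ht : 0 ≤ t) {F : ℝ → Lp ℝ p μ}
    (h : ∀ s, 0 ≤ s → s ≤ t → 0 ≤ F s) :
    0 ≤ ∫ s in (0 : ℝ)..t, F s := by
  rw [intervalIntegral.integral_of_le ht]
  refine integral_nonneg_of_ae ?_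
  refine ae_restrict_of_forall_mem measurableSet_Ioc fun s hs => h s hs.1.le hs.2

theorem norm_le_of_le {f g : Lp ℝ p μ} (hf : 0 ≤ f) (h : f ≤ g) : ‖f‖ ≤ ‖g‖ :=
  norm_le_norm_of_abs_le_abs (by rwa [abs_of_nonneg hf, abs_of_nonneg (hf.trans h)])

theorem norm_superadd (hp : p ≠ ∞) {f g : Lp ℝ p μ} (hf : 0 ≤ f) (hg : 0 ≤ g) :
    ‖f‖ ^ p.toReal + ‖g‖ ^ p.toReal ≤ ‖f + g‖ ^ p.toReal := by
  have hp1 : 1 ≤ p := Fact.out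
  have hp0 : p ≠ 0 := (zero_lt_one.trans_le hp1).ne'
  have hpr : 1 ≤ p.toReal := by
    rw [← ENNReal.toReal_one]; exact ENNReal.toReal_mono hp hp1
  have hpr0 : 0 < p.toReal := zero_lt_one.trans_le hpr
  have e : ∀ h : Lp ℝ p μ, ‖h‖ₑ ^ p.toReal = ∫⁻ x, ‖h x‖ₑ ^ p.toReal ∂μ := by
    intro h
    rw [Lp.enorm_def, eLpNorm_eq_lintegral_rpow_enorm_toReal hp0 hp, ← ENNReal.rpow_mul,
      one_div, inv_mul_cancel₀ hpr0.ne', ENNReal.rpow_one]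
  have key : ‖f‖ₑ ^ p.toReal + ‖g‖ₑ ^ p.toReal ≤ ‖f + g‖ₑ ^ p.toReal := by
    rw [e, e, e, ← lintegral_add_left']
    · refine lintegral_mono_ae ?_
      rw [← Lp.coeFn_nonneg] at hf hg
      filter_upwards [hf, hg, Lp.coeFn_add f g] with x hx hy hxy
      rw [hxy]
      refine (ENNReal.add_rpow_le_rpow_add _ _ hpr).trans (le_of_eq ?_)
      congr 1
      simp only [Pi.zero_apply] at hx hy
      rw [Pi.add_apply, Real.enorm_of_nonneg hx, Real.enorm_of_nonneg hy,
        Real.enorm_of_nonneg (add_nonneg hx hy), ENNReal.ofReal_add hx hy]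
    · exact ((Lp.aestronglyMeasurable f).enorm).pow_const _
  have h3 := ENNReal.toReal_mono (ENNReal.rpow_ne_top_of_nonneg hpr0.le (by simp)) key
  rw [ENNReal.toReal_add (ENNReal.rpow_ne_top_of_nonneg hpr0.le (by simp))
    (ENNReal.rpow_ne_top_of_nonneg hpr0.le (by simp))] at h3
  simpa [← ENNReal.toReal_rpow] using h3

theorem mono_cauchy (hp : p ≠ ∞) {a : ℕ → Lp ℝ p μ} (h0 : ∀ k, 0 ≤ a k) (hm : Monotone a)
    {C : ℝ} (hC : ∀ k, ‖a k‖ ≤ C) {δ : ℝ} (hδ : 0 < δ) :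
    ∃ N, ∀ n k, N ≤ n → n ≤ k → ‖a k - a n‖ < δ := by
  have hp1 : 1 ≤ p := Fact.out
  have hpr : 1 ≤ p.toReal := by
    rw [← ENNReal.toReal_one]; exact ENNReal.toReal_mono hp hp1
  have hpr0 : 0 < p.toReal := zero_lt_one.trans_le hpr
  set b : ℕ → ℝ := fun k => ‖a k‖ ^ p.toReal with hb
  have hbm : Monotone b := fun i j hij =>
    Real.rpow_le_rpow (norm_nonneg _) (norm_le_of_le (h0 i) (hm hij)) hpr0.le
  have hbb : BddAbove (Set.range b) := by
    refine ⟨C ^ p.toReal, ?_⟩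
    rintro _ ⟨k, rfl⟩
    exact Real.rpow_le_rpow (norm_nonneg _) (hC k) hpr0.le
  have hcs : CauchySeq b := (tendsto_atTop_ciSup hbm hbb).cauchySeq
  obtain ⟨N, hN⟩ := Metric.cauchySeq_iff.1 hcs (δ ^ p.toReal) (Real.rpow_pos_of_pos hδ _)
  refine ⟨N, fun n k hn hnk => ?_⟩
  have h1 := norm_superadd hp (h0 n) (sub_nonneg.2 (hm hnk))
  rw [add_sub_cancel] at h1
  have h2 := hN k (hn.trans hnk) n hn
  rw [Real.dist_eq] at h2
  have h3 := (le_abs_self _).trans_lt h2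
  have h4 : ‖a k - a n‖ ^ p.toReal < δ ^ p.toReal := by
    simp only [hb] at h3; linarith
  exact (Real.rpow_lt_rpow_iff (norm_nonneg _) hδ.le hpr0).1 h4

/-- `M` is the operator of multiplication by `W`. -/
def IsMul (M : Lp ℝ p μ →L[ℝ] Lp ℝ p μ) (W : Ω → ℝ) : Prop :=
  ∀ f : Lp ℝ p μ, ⇑(M f) =ᵐ[μ] fun ω => W ω * f ω

theorem aesm_mul (hp : p ≠ ∞) {W : Ω → ℝ} (hW : LocallyMeasurable μ W) (f : Lp ℝ p μ) :
    AEStronglyMeasurable (fun ω => W ω * f ω) μ := by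
  have hp1 : 1 ≤ p := Fact.out
  have hp0 : p ≠ 0 := (zero_lt_one.trans_le hp1).ne'
  obtain ⟨t, ht, hft, hσ⟩ := (Lp.finStronglyMeasurable f hp0 hp).exists_set_sigmaFinite
  have hWt : AEMeasurable W (μ.restrict t) := by
    have hU : t = ⋃ n, (spanningSets (μ.restrict t) n ∩ t) := by
      rw [← Set.iUnion_inter, iUnion_spanningSets, Set.univ_inter]
    rw [hU]
    refine AEMeasurable.iUnion fun n => ?_
    obtain ⟨g, hg, hWg⟩ := hW (spanningSets (μ.restrict t) n ∩ t)
      ((measurableSet_spanningSets _ n).inter ht) (by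
        rw [← Measure.restrict_apply (measurableSet_spanningSets _ n)]
        exact measure_spanningSets_lt_top _ n)
    exact ⟨g, hg, hWg⟩
  have h1 : AEStronglyMeasurable (fun ω => W ω * f ω) (μ.restrict t) :=
    hWt.aestronglyMeasurable.mul (Lp.aestronglyMeasurable f).restrict
  have h2 := (aestronglyMeasurable_indicator_iff ht).2 h1
  convert h2 using 1
  ext ω
  by_cases hω : ω ∈ t
  · simp [hω]
  · simp [hω, hft ω hω]

theorem exists_mul (hp : p ≠ ∞) {W : Ω → ℝ} (hW : LocallyMeasurable μ W) {C : ℝ}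
    (hC : ∀ ω, |W ω| ≤ C) : ∃ M : Lp ℝ p μ →L[ℝ] Lp ℝ p μ, IsMul M W := by
  have hmem : ∀ f : Lp ℝ p μ, MemLp (fun ω => W ω * f ω) p μ := by
    intro f
    refine MemLp.of_le_mul (c := C) (Lp.memLp f) (aesm_mul hp hW f) (ae_of_all _ fun ω => ?_)
    rw [norm_mul]
    exact mul_le_mul_of_nonneg_right (hC ω) (norm_nonneg _)
  let L : Lp ℝ p μ →ₗ[ℝ] Lp ℝ p μ :=
    { toFun := fun f => (hmem f).toLp _
      map_add' := fun f g => by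
        refine Lp.ext ?_
        filter_upwards [(hmem (f + g)).coeFn_toLp, (hmem f).coeFn_toLp, (hmem g).coeFn_toLp,
          Lp.coeFn_add f g, Lp.coeFn_add ((hmem f).toLp _) ((hmem g).toLp _)]
          with x h1 h2 h3 h4 h5
        rw [h1, h5, Pi.add_apply, h2, h3, h4, Pi.add_apply]; ring
      map_smul' := fun c f => by
        refine Lp.ext ?_
        filter_upwards [(hmem (c • f)).coeFn_toLp, (hmem f).coeFn_toLp,
          Lp.coeFn_smul c f, Lp.coeFn_smul c ((hmem f).toLp _)]
          with x h1 h2 h4 h5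
        rw [h1, RingHom.id_apply, h5, Pi.smul_apply, h2, h4, Pi.smul_apply]
        simp only [smul_eq_mul]; ring }
  refine ⟨L.mkContinuous C fun f => ?_, fun f => (hmem f).coeFn_toLp⟩
  refine Lp.norm_le_mul_norm_of_ae_le_mul ?_
  filter_upwards [(hmem f).coeFn_toLp] with x hx
  change ‖((hmem f).toLp _ : Ω → ℝ) x‖ ≤ _
  rw [hx, norm_mul]
  exact mul_le_mul_of_nonneg_right (hC x) (norm_nonneg _)

theorem mul_le {M1 M2 : Lp ℝ p μ →L[ℝ] Lp ℝ p μ} {W1 W2 : Ω → ℝ} (h1 : IsMul M1 W1)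
    (h2 : IsMul M2 W2) (h : ∀ ω, W1 ω ≤ W2 ω) {f : Lp ℝ p μ} (hf : 0 ≤ f) : M1 f ≤ M2 f := by
  rw [← Lp.coeFn_le]
  rw [← Lp.coeFn_nonneg] at hf
  filter_upwards [h1 f, h2 f, hf] with x e1 e2 hx
  rw [e1, e2]
  exact mul_le_mul_of_nonneg_right (h x) hx

theorem isMul_const (c : ℝ) :
    IsMul (c • ContinuousLinearMap.id ℝ (Lp ℝ p μ)) (fun _ => c) := by
  intro f
  exact Lp.coeFn_smul c f

theorem isMul_sub {M1 M2 : Lp ℝ p μ →L[ℝ] Lp ℝ p μ} {W1 W2 : Ω → ℝ} (h1 : IsMul M1 W1)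
    (h2 : IsMul M2 W2) : IsMul (M1 - M2) (fun ω => W1 ω - W2 ω) := by
  intro f
  filter_upwards [h1 f, h2 f, Lp.coeFn_sub (M1 f) (M2 f)] with x e1 e2 e3
  rw [sub_apply, e3, Pi.sub_apply, e1, e2]; ring

theorem mul_nonneg' {M : Lp ℝ p μ →L[ℝ] Lp ℝ p μ} {W : Ω → ℝ} (h1 : IsMul M W)
    (h : ∀ ω, 0 ≤ W ω) {f : Lp ℝ p μ} (hf : 0 ≤ f) : 0 ≤ M f := by
  have := mul_le (isMul_const 0) h1 h hf
  simpa using this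

theorem locmeas_comp {α β : Type*} [MeasurableSpace α] [MeasurableSpace β] {V : Ω → α}
    (hV : LocallyMeasurable μ V) {h : α → β} (hh : Measurable h) :
    LocallyMeasurable μ (fun ω => h (V ω)) := by
  intro B hB hμ
  obtain ⟨g, hg, he⟩ := hV B hB hμ
  exact ⟨fun ω => h (g ω), hh.comp hg, he.mono fun ω hω => by simp [hω]⟩

end lpfacts

section pert

variable {Ω : Type*} [MeasurableSpace Ω] {μ : Measure Ω} {p : ℝ≥0∞} [Fact (1 ≤ p)]

def Pert (T S : ℝ → Lp ℝ p μ →L[ℝ] Lp ℝ p μ) (M : Lp ℝ p μ →L[ℝ] Lp ℝ p μ) : Prop :=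
  IsC0Semigroup S ∧ (∀ f g, InGenerator S f g ↔ InGenerator T f (g + M f)) ∧ IsPositiveSG S

theorem pert_gen {T S : ℝ → Lp ℝ p μ →L[ℝ] Lp ℝ p μ} {W : Ω → ℝ}
    (h : IsPerturbedSG μ p T S W) {M : Lp ℝ p μ →L[ℝ] Lp ℝ p μ} (hM : IsMul M W)
    (f g : Lp ℝ p μ) : InGenerator S f g ↔ InGenerator T f (g + M f) := by
  rw [h.2 f g]
  constructor
  · rintro ⟨g0, hg0, he⟩
    have : g + M f = g0 := by
      refine Lp.ext ?_
      filter_upwards [he, hM f, Lp.coeFn_add g (M f)] with x h1 h2 h3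
      rw [h3, Pi.add_apply, h1, h2]; ring
    rwa [this]
  · intro hg
    refine ⟨_, hg, ?_⟩
    filter_upwards [hM f, Lp.coeFn_add g (M f)] with x h2 h3
    rw [h3, Pi.add_apply, h2]; ring

theorem sg_integrable {T : ℝ → Lp ℝ p μ →L[ℝ] Lp ℝ p μ} (hT : IsC0Semigroup T) {t : ℝ}
    (ht : 0 ≤ t) {y : ℝ → Lp ℝ p μ} (hy : ContinuousOn y (Set.Icc 0 t)) :
    IntervalIntegrable (fun s => T (t - s) (y s)) volume 0 t := by
  refine ContinuousOn.intervalIntegrable ?_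
  rw [Set.uIcc_of_le ht]
  exact sg_continuousOn hT hy

theorem sg_pos_mono {T : ℝ → Lp ℝ p μ →L[ℝ] Lp ℝ p μ} (hT : IsPositiveSG T) {t : ℝ}
    (ht : 0 ≤ t) {f g : Lp ℝ p μ} (h : f ≤ g) : T t f ≤ T t g := by
  rw [← sub_nonneg, ← map_sub]
  exact hT t ht _ (sub_nonneg.2 h)

theorem pert_pos {T S : ℝ → Lp ℝ p μ →L[ℝ] Lp ℝ p μ} (hT : IsC0Semigroup T)
    (hTpos : IsPositiveSG T) (hS : IsC0Semigroup S) {M : Lp ℝ p μ →L[ℝ] Lp ℝ p μ}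
    (hgen : ∀ f g, InGenerator S f g ↔ InGenerator T f (g + M f)) {W : Ω → ℝ} {c : ℝ}
    (hM : IsMul M W) (hc : ∀ ω, W ω ≤ c) : IsPositiveSG S := by
  intro b hb f hf
  set T' : ℝ → Lp ℝ p μ →L[ℝ] Lp ℝ p μ := fun t => Real.exp (-(c * t)) • T t with hT'
  have hT'c : IsC0Semigroup T' := rescale_c0 hT c
  have hT'pos : IsPositiveSG T' := fun t ht f hf =>
    smul_nonneg (Real.exp_pos _).le (hTpos t ht f hf)
  set N : Lp ℝ p μ →L[ℝ] Lp ℝ p μ := c • ContinuousLinearMap.id ℝ (Lp ℝ p μ) - M with hN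
  have hNm : IsMul N (fun ω => c - W ω) := isMul_sub (isMul_const c) hM
  have hNpos : ∀ g : Lp ℝ p μ, 0 ≤ g → 0 ≤ N g := fun g hg =>
    mul_nonneg' hNm (fun ω => sub_nonneg.2 (hc ω)) hg
  have duh : ∀ t, 0 ≤ t → S t f = T' t f + ∫ s in (0 : ℝ)..t, T' (t - s) (N (S s f)) := by
    intro t ht
    have := duhamel hT'c hS (-N) (fun f g hfg => by
      have h1 := rescale_gen c ((hgen f g).1 hfg)
      have e : g + (-N) f = g + M f - c • f := by
        simp only [hN, neg_apply, sub_apply, smul_apply, ContinuousLinearMap.id_apply]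
        abel
      rw [e]; exact h1) ht f
    simp only [neg_apply, map_neg, intervalIntegral.integral_neg] at this
    rw [← sub_eq_iff_eq_add', ← neg_sub, this, neg_neg]
  set u : ℝ → Lp ℝ p μ := fun s => (-(S (max s 0) f)) ⊔ 0 with hu
  have huc : Continuous u := by
    have h1 : Continuous fun s : ℝ => S (max s 0) f :=
      (hS.2 f).comp_continuous (by fun_prop) (fun x => Set.mem_Ici.2 (le_max_right _ _))
    exact h1.neg.sup continuous_const
  have hu0 : ∀ s, 0 ≤ u s := fun s => le_sup_right
  obtain ⟨K, hK0, hK⟩ := sg_bound hT'c b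
  have hJ : ∀ t, 0 ≤ t → t ≤ b → ‖u t‖ ≤ (K * ‖N‖) * ∫ s in (0 : ℝ)..t, ‖u s‖ := by
    intro t ht htb
    have hi1 : IntervalIntegrable (fun s => T' (t - s) (N (u s))) volume 0 t :=
      sg_integrable hT'c ht (N.continuous.comp huc).continuousOn
    have hi2 : IntervalIntegrable (fun s => T' (t - s) (N (S s f))) volume 0 t :=
      sg_integrable hT'c ht
        (N.continuous.comp_continuousOn ((hS.2 f).mono fun s hs => hs.1))
    have hle : u t ≤ ∫ s in (0 : ℝ)..t, T' (t - s) (N (u s)) := by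
      refine sup_le ?_ ?_
      · rw [max_eq_left ht, duh t ht, neg_add]
        have h1 : -(T' t f) ≤ 0 := neg_nonpos.2 (hT'pos t ht f hf)
        have h2 : -(∫ s in (0 : ℝ)..t, T' (t - s) (N (S s f))) ≤
            ∫ s in (0 : ℝ)..t, T' (t - s) (N (u s)) := by
          rw [← intervalIntegral.integral_neg]
          refine ii_mono ht hi2.neg hi1 fun s hs hst => ?_
          rw [← map_neg, ← map_neg]
          refine sg_pos_mono hT'pos (by linarith) ?_
          rw [← sub_nonneg, ← map_sub]
          refine hNpos _ (sub_nonneg.2 ?_)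
          simp only [hu, max_eq_left hs]
          exact le_sup_left
        calc _ ≤ 0 + _ := add_le_add h1 h2
          _ = _ := zero_add _
      · exact ii_nonneg ht fun s hs hst =>
          hT'pos _ (by linarith) _ (hNpos _ (hu0 s))
    refine (norm_le_of_le (hu0 t) hle).trans ?_
    rw [← intervalIntegral.integral_const_mul]
    refine intervalIntegral.norm_integral_le_of_norm_le ht (ae_of_all _ fun s hs => ?_)
      ((huc.norm.const_mul _).intervalIntegrable _ _) 
    rw [mul_assoc]
    exact (T' (t - s)).le_of_opNorm_le_of_le (hK _ (by linarith [hs.2]) (by linarith [hs.1]))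
      (N.le_opNorm _)
  set φ : ℝ → ℝ := fun t => ∫ s in (0 : ℝ)..t, ‖u s‖ with hφ
  have hφd : ∀ x, HasDerivAt φ ‖u x‖ x := fun x =>
    intervalIntegral.integral_hasDerivAt_right (huc.norm.intervalIntegrable _ _)
      (huc.norm.stronglyMeasurableAtFilter _ _) huc.norm.continuousAt
  have hφ0 : φ 0 = 0 := by simp [hφ]
  have hφn : ∀ t, 0 ≤ t → 0 ≤ φ t := fun t ht =>
    intervalIntegral.integral_nonneg ht fun s _ => norm_nonneg _
  have hg := norm_le_gronwallBound_of_norm_deriv_right_le (f := φ) (f' := fun x => ‖u x‖)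
    (δ := 0) (K := K * ‖N‖) (ε := 0) (a := 0) (b := b)
    (fun x _ => (hφd x).continuousAt.continuousWithinAt)
    (fun x _ => (hφd x).hasDerivWithinAt) (by simp [hφ0]) (fun x hx => by
      rw [norm_norm, Real.norm_of_nonneg (hφn x hx.1), add_zero]
      exact hJ x hx.1 hx.2.le) b ⟨hb, le_rfl⟩
  rw [gronwallBound_ε0_δ0] at hg
  have hφb : φ b = 0 := by simpa using hg
  have hub := hJ b hb le_rfl
  change ‖u b‖ ≤ K * ‖N‖ * φ b at hub
  rw [hφb, mul_zero] at hub
  have hub0 : u b = 0 := norm_le_zero_iff.1 hub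
  have : -(S b f) ≤ 0 := by
    rw [← hub0]
    simp only [hu, max_eq_left hb]
    exact le_sup_left
  exact neg_nonpos.1 this

theorem pert_of {T S : ℝ → Lp ℝ p μ →L[ℝ] Lp ℝ p μ} (hT : IsC0Semigroup T)
    (hTpos : IsPositiveSG T) {W : Ω → ℝ} (h : IsPerturbedSG μ p T S W)
    {M : Lp ℝ p μ →L[ℝ] Lp ℝ p μ} (hM : IsMul M W) {c : ℝ} (hc : ∀ ω, W ω ≤ c) :
    Pert T S M :=
  ⟨h.1, pert_gen h hM, pert_pos hT hTpos h.1 (pert_gen h hM) hM hc⟩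

theorem pert_zero {T : ℝ → Lp ℝ p μ →L[ℝ] Lp ℝ p μ} (hT : IsC0Semigroup T)
    (hTpos : IsPositiveSG T) : Pert T T 0 :=
  ⟨hT, fun f g => by simp, hTpos⟩

theorem pert_duhamel {T S1 S2 : ℝ → Lp ℝ p μ →L[ℝ] Lp ℝ p μ} {M1 M2 : Lp ℝ p μ →L[ℝ] Lp ℝ p μ}
    (h1 : Pert T S1 M1) (h2 : Pert T S2 M2) {t : ℝ} (ht : 0 ≤ t) (f : Lp ℝ p μ) :
    S1 t f - S2 t f = ∫ s in (0 : ℝ)..t, S1 (t - s) ((M2 - M1) (S2 s f)) := by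
  refine duhamel h1.1 h2.1 (M2 - M1) (fun f g hfg => ?_) ht f
  rw [h1.2.1]
  have := (h2.2.1 f g).1 hfg
  convert this using 1
  rw [sub_apply]; abel

theorem pert_le {T S : ℝ → Lp ℝ p μ →L[ℝ] Lp ℝ p μ} {M : Lp ℝ p μ →L[ℝ] Lp ℝ p μ}
    (hT : IsC0Semigroup T) (hTpos : IsPositiveSG T) (h : Pert T S M) (hM : ∀ g, 0 ≤ g → 0 ≤ M g)
    {t : ℝ} (ht : 0 ≤ t) {f : Lp ℝ p μ} (hf : 0 ≤ f) : S t f ≤ T t f := by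
  rw [← sub_nonneg, pert_duhamel (pert_zero hT hTpos) h ht f]
  refine ii_nonneg ht fun s hs hst => hTpos _ (by linarith) _ ?_
  rw [sub_zero]
  exact hM _ (h.2.2 s hs f hf)

theorem orbit_cont {S : ℝ → Lp ℝ p μ →L[ℝ] Lp ℝ p μ} (hS : IsC0Semigroup S)
    (B : Lp ℝ p μ →L[ℝ] Lp ℝ p μ) (f : Lp ℝ p μ) (t : ℝ) :
    ContinuousOn (fun s => B (S s f)) (Set.Icc 0 t) :=
  B.continuous.comp_continuousOn ((hS.2 f).mono fun s hs => hs.1)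

theorem ineq_one {T S1 S2 : ℝ → Lp ℝ p μ →L[ℝ] Lp ℝ p μ} {M1 M2 : Lp ℝ p μ →L[ℝ] Lp ℝ p μ}
    (hT : IsC0Semigroup T) (hTpos : IsPositiveSG T)
    (h1 : Pert T S1 M1) (h2 : Pert T S2 M2) (hM1 : ∀ g, 0 ≤ g → 0 ≤ M1 g)
    (hM2 : ∀ g, 0 ≤ g → 0 ≤ M2 g) {d : ℝ} (hd : 0 ≤ d)
    (hM : ∀ g, 0 ≤ g → (M2 - M1) g ≤ d • g) {t : ℝ} (ht : 0 ≤ t) {f : Lp ℝ p μ} (hf : 0 ≤ f) :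
    S1 t f - S2 t f ≤ (d * t) • T t f := by
  rw [pert_duhamel h1 h2 ht f]
  have e : (d * t) • T t f = ∫ s in (0 : ℝ)..t, d • T t f := by
    rw [intervalIntegral.integral_const, sub_zero, smul_smul, mul_comm]
  rw [e]
  refine ii_mono ht (sg_integrable h1.1 ht (orbit_cont h2.1 _ f t)) (by simp) fun s hs hst => ?_
  have hy : 0 ≤ S2 s f := h2.2.2 s hs f hf
  have hts : 0 ≤ t - s := by linarith
  calc S1 (t - s) ((M2 - M1) (S2 s f)) ≤ S1 (t - s) (d • S2 s f) :=
        sg_pos_mono h1.2.2 hts (hM _ hy)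
    _ ≤ T (t - s) (d • S2 s f) := pert_le hT hTpos h1 hM1 hts (smul_nonneg hd hy)
    _ ≤ T (t - s) (d • T s f) := sg_pos_mono hTpos hts
        (smul_le_smul_of_nonneg_left (pert_le hT hTpos h2 hM2 hs hf) hd)
    _ = d • T t f := by
        rw [map_smul]
        have := hT.1.2 (t - s) s hts hs
        rw [sub_add_cancel] at this
        rw [this]; rfl

theorem ineq_two {T S1 S2 : ℝ → Lp ℝ p μ →L[ℝ] Lp ℝ p μ} {M1 M2 : Lp ℝ p μ →L[ℝ] Lp ℝ p μ}
    (hT : IsC0Semigroup T) (hTpos : IsPositiveSG T)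
    (h1 : Pert T S1 M1) (h2 : Pert T S2 M2) (hM1 : ∀ g, 0 ≤ g → 0 ≤ M1 g)
    (hM2 : ∀ g, 0 ≤ g → 0 ≤ M2 g) {t : ℝ} (ht : 0 ≤ t) {f : Lp ℝ p μ} (hf : 0 ≤ f) :
    S2 t f - S1 t f ≤ ∫ s in (0 : ℝ)..t, T (t - s) (M1 (S2 s f)) := by
  rw [← neg_sub, pert_duhamel h1 h2 ht f, ← intervalIntegral.integral_neg]
  refine ii_mono ht (sg_integrable h1.1 ht (orbit_cont h2.1 _ f t)).neg
    (sg_integrable hT ht (orbit_cont h2.1 _ f t)) fun s hs hst => ?_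
  have hy : 0 ≤ S2 s f := h2.2.2 s hs f hf
  have hts : 0 ≤ t - s := by linarith
  calc -(S1 (t - s) ((M2 - M1) (S2 s f))) ≤ S1 (t - s) (M1 (S2 s f)) := by
        rw [← map_neg]
        refine sg_pos_mono h1.2.2 hts ?_
        rw [sub_apply, neg_sub]
        exact sub_le_self _ (hM2 _ hy)
    _ ≤ T (t - s) (M1 (S2 s f)) := pert_le hT hTpos h1 hM1 hts (hM1 _ hy)

end pert

section rates

variable {Ω : Type*}

theorem trunc_nonneg (V : Ω → ℝ≥0∞) (n : ℕ) (ω : Ω) : 0 ≤ trunc V n ω := ENNReal.toReal_nonneg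

theorem trunc_le (V : Ω → ℝ≥0∞) (n : ℕ) (ω : Ω) : trunc V n ω ≤ n := by
  have := ENNReal.toReal_mono (ENNReal.natCast_ne_top n) (min_le_right (V ω) (n : ℝ≥0∞))
  simpa [trunc] using this

theorem trunc_top {V : Ω → ℝ≥0∞} {ω : Ω} (h : V ω = ∞) (n : ℕ) : trunc V n ω = n := by
  simp [trunc, h]

theorem trunc_fin {V : Ω → ℝ≥0∞} {ω : Ω} {v : ℝ} (hv : 0 ≤ v) (h : V ω = ENNReal.ofReal v)
    (n : ℕ) : trunc V n ω = min v n := by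
  unfold trunc
  rw [h, ENNReal.toReal_min (by simp) (by simp), ENNReal.toReal_ofReal hv]
  simp

theorem resid_top {V : Ω → ℝ≥0∞} {ω : Ω} (h : V ω = ∞) (n : ℕ) : resid V n ω = ∞ := by
  simp [resid, h]

theorem resid_fin {V : Ω → ℝ≥0∞} {ω : Ω} {v : ℝ} (hv : 0 ≤ v) (h : V ω = ENNReal.ofReal v)
    (n : ℕ) : resid V n ω = ENNReal.ofReal (v - min v n) := by
  unfold resid
  have : min (V ω) (n : ℝ≥0∞) = ENNReal.ofReal (min v n) := by
    rw [h, ENNReal.ofReal_min]; simp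
  rw [this, h, ENNReal.ofReal_sub _ (le_min hv (by positivity))]

theorem smul_top {V : Ω → ℝ≥0∞} {ω : Ω} (h : V ω = ∞) {ε : ℝ} (hε : 0 < ε) :
    smulRate ε V ω = ∞ := by
  simp [smulRate, h, hε]

theorem smul_fin {V : Ω → ℝ≥0∞} {ω : Ω} {v : ℝ} (h : V ω = ENNReal.ofReal v)
    {ε : ℝ} (hε : 0 < ε) : smulRate ε V ω = ENNReal.ofReal (ε * v) := by
  rw [smulRate, h, ENNReal.ofReal_mul hε.le]

theorem rate_cases (V : Ω → ℝ≥0∞) (ω : Ω) : V ω = ∞ ∨ ∃ v : ℝ, 0 ≤ v ∧ V ω = ENNReal.ofReal v := by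
  by_cases h : V ω = ∞
  · exact Or.inl h
  · exact Or.inr ⟨(V ω).toReal, ENNReal.toReal_nonneg, (ENNReal.ofReal_toReal h).symm⟩

theorem rate_one (V : Ω → ℝ≥0∞) (n m : ℕ) (ω : Ω) :
    trunc (resid V n) m ω = trunc V (n + m) ω - trunc V n ω := by
  rcases rate_cases V ω with h | ⟨v, hv, h⟩
  · rw [trunc_top (resid_top h n), trunc_top h, trunc_top h]; push_cast; ring
  · rw [trunc_fin (sub_nonneg.2 (min_le_left _ _)) (resid_fin hv h n), trunc_fin hv h,
      trunc_fin hv h]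
    push_cast
    have : (0 : ℝ) ≤ m := by positivity
    rcases le_total v n with h1 | h1
    · rw [min_eq_left h1, min_eq_left (by linarith), min_eq_left (by linarith)]
    · rw [min_eq_right h1]
      rcases le_total (v - n) m with h2 | h2
      · rw [min_eq_left h2, min_eq_left (by linarith)]
      · rw [min_eq_right h2, min_eq_right (by linarith)]; ring

theorem rate_two (V : Ω → ℝ≥0∞) {ε : ℝ} (hε : 0 < ε) (hε1 : ε ≤ 1) {k j : ℕ} (hkj : k ≤ j)
    (ω : Ω) : ε * trunc V k ω ≤ trunc (smulRate ε V) j ω := by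
  have hk : (k : ℝ) ≤ j := by exact_mod_cast hkj
  have hk0 : (0 : ℝ) ≤ k := by positivity
  rcases rate_cases V ω with h | ⟨v, hv, h⟩
  · rw [trunc_top h, trunc_top (smul_top h hε)]; nlinarith
  · rw [trunc_fin hv h, trunc_fin (mul_nonneg hε.le hv) (smul_fin h hε)]
    refine le_min (mul_le_mul_of_nonneg_left (min_le_left _ _) hε.le) ?_
    refine (mul_le_mul_of_nonneg_left (min_le_right _ _) hε.le).trans (by nlinarith)

theorem rate_three (V : Ω → ℝ≥0∞) {ε : ℝ} (hε : 0 < ε) (hε1 : ε ≤ 1) (n k : ℕ) (ω : Ω) :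
    trunc (smulRate ε V) k ω ≤ ε * n + trunc (resid V n) k ω := by
  have hk0 : (0 : ℝ) ≤ k := by positivity
  have hn0 : (0 : ℝ) ≤ n := by positivity
  have hen : 0 ≤ ε * n := by positivity
  rcases rate_cases V ω with h | ⟨v, hv, h⟩
  · rw [trunc_top (resid_top h n), trunc_top (smul_top h hε)]; linarith
  · rw [trunc_fin (sub_nonneg.2 (min_le_left _ _)) (resid_fin hv h n),
      trunc_fin (mul_nonneg hε.le hv) (smul_fin h hε)]
    rcases le_total v n with h1 | h1
    · rw [min_eq_left h1, sub_self, min_eq_left hk0]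
      refine (min_le_left _ _).trans ?_
      nlinarith
    · rw [min_eq_right h1]
      rcases le_total (v - n) k with h2 | h2
      · rw [min_eq_left h2]
        refine (min_le_left _ _).trans ?_
        nlinarith
      · rw [min_eq_right h2]
        exact (min_le_right _ _).trans (by linarith)

theorem trunc_locmeas [MeasurableSpace Ω] {μ : Measure Ω} {V : Ω → ℝ≥0∞}
    (hV : LocallyMeasurable μ V) (n : ℕ) : LocallyMeasurable μ (trunc V n) :=
  locmeas_comp hV (h := fun x : ℝ≥0∞ => (min x (n : ℝ≥0∞)).toReal) (by fun_prop)

theorem resid_locmeas [MeasurableSpace Ω] {μ : Measure Ω} {V : Ω → ℝ≥0∞}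
    (hV : LocallyMeasurable μ V) (n : ℕ) : LocallyMeasurable μ (resid V n) :=
  locmeas_comp hV (h := fun x : ℝ≥0∞ => x - min x (n : ℝ≥0∞)) (by fun_prop)

theorem smul_locmeas [MeasurableSpace Ω] {μ : Measure Ω} {V : Ω → ℝ≥0∞}
    (hV : LocallyMeasurable μ V) (ε : ℝ) : LocallyMeasurable μ (smulRate ε V) :=
  locmeas_comp hV (h := fun x : ℝ≥0∞ => ENNReal.ofReal ε * x) (by fun_prop)

end rates

section final

variable {Ω : Type*} [MeasurableSpace Ω] {μ : Measure Ω} {p : ℝ≥0∞} [Fact (1 ≤ p)]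

theorem absorb (hp : p ≠ ∞) {T : ℝ → Lp ℝ p μ →L[ℝ] Lp ℝ p μ} (hT : IsC0Semigroup T)
    (hTpos : IsPositiveSG T) {V : Ω → ℝ≥0∞} (hV : LocallyMeasurable μ V)
    {TV : ℝ → Lp ℝ p μ →L[ℝ] Lp ℝ p μ} (h : IsAbsorptionSG μ p T V TV) :
    ∃ (S : ℕ → ℝ → Lp ℝ p μ →L[ℝ] Lp ℝ p μ) (M : ℕ → Lp ℝ p μ →L[ℝ] Lp ℝ p μ),
      (∀ n, IsMul (M n) (trunc V n)) ∧ (∀ n, Pert T (S n) (M n)) ∧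
      (∀ n g, 0 ≤ g → 0 ≤ M n g) ∧
      ∀ t : ℝ, 0 ≤ t → ∀ f, Tendsto (fun n => S n t f) atTop (𝓝 (TV t f)) := by
  obtain ⟨S, hS, hlim⟩ := h
  have hM : ∀ n, ∃ M : Lp ℝ p μ →L[ℝ] Lp ℝ p μ, IsMul M (trunc V n) := fun n =>
    exists_mul hp (trunc_locmeas hV n) (C := n) fun ω => by
      rw [abs_of_nonneg (trunc_nonneg V n ω)]; exact trunc_le V n ω
  choose M hM using hM
  exact ⟨S, M, hM, fun n => pert_of hT hTpos (hS n) (hM n) (trunc_le V n),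
    fun n g hg => mul_nonneg' (hM n) (trunc_nonneg V n) hg, hlim⟩

theorem absorb_le (hp : p ≠ ∞) {T : ℝ → Lp ℝ p μ →L[ℝ] Lp ℝ p μ} (hT : IsC0Semigroup T)
    (hTpos : IsPositiveSG T) {V : Ω → ℝ≥0∞} (hV : LocallyMeasurable μ V)
    {TV : ℝ → Lp ℝ p μ →L[ℝ] Lp ℝ p μ} (h : IsAbsorptionSG μ p T V TV)
    {t : ℝ} (ht : 0 ≤ t) {f : Lp ℝ p μ} (hf : 0 ≤ f) : TV t f ≤ T t f := by
  obtain ⟨S, M, hM, hP, hMn, hlim⟩ := absorb hp hT hTpos hV h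
  exact le_of_tendsto' (hlim t ht f) fun n => pert_le hT hTpos (hP n) (hMn n) ht hf

theorem all_of_pos {ι : Type*} {l : Filter ι} {F : ι → Lp ℝ p μ →L[ℝ] Lp ℝ p μ}
    {G : Lp ℝ p μ →L[ℝ] Lp ℝ p μ}
    (h : ∀ f, 0 ≤ f → Tendsto (fun i => F i f) l (𝓝 (G f))) (f : Lp ℝ p μ) :
    Tendsto (fun i => F i f) l (𝓝 (G f)) := by
  have := (h _ (posPart_nonneg f)).sub (h _ (negPart_nonneg f))
  simpa only [← map_sub, posPart_sub_negPart] using this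

/-- key estimate for strong regularity ⟹ regularity -/
theorem est_one (hp : p ≠ ∞) {T : ℝ → Lp ℝ p μ →L[ℝ] Lp ℝ p μ} (hT : IsC0Semigroup T)
    (hTpos : IsPositiveSG T) {V : Ω → ℝ≥0∞} (hV : LocallyMeasurable μ V)
    {ε : ℝ} (hε : 0 < ε) (hε1 : ε ≤ 1) {U R : ℝ → Lp ℝ p μ →L[ℝ] Lp ℝ p μ}
    (hU : IsAbsorptionSG μ p T (smulRate ε V) U) (n : ℕ)
    (hR : IsAbsorptionSG μ p T (resid V n) R) {t : ℝ} (ht : 0 ≤ t) {f : Lp ℝ p μ} (hf : 0 ≤ f) :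
    ‖T t f - U t f‖ ≤ ‖T t f - R t f‖ + ε * n * t * ‖T t f‖ := by
  have h0 : 0 ≤ T t f - U t f := sub_nonneg.2 (absorb_le hp hT hTpos (smul_locmeas hV ε) hU ht hf)
  obtain ⟨S2, M2, hM2, hP2, hMn2, hlim2⟩ := absorb hp hT hTpos (smul_locmeas hV ε) hU
  obtain ⟨S1, M1, hM1, hP1, hMn1, hlim1⟩ := absorb hp hT hTpos (resid_locmeas hV n) hR
  have hen : 0 ≤ ε * n := by positivity
  have h1 : R t f - U t f ≤ (ε * n * t) • T t f := by
    refine le_of_tendsto' ((hlim1 t ht f).sub (hlim2 t ht f)) fun k => ?_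
    refine ineq_one hT hTpos (hP1 k) (hP2 k) (hMn1 k) (hMn2 k) hen (fun g hg => ?_) ht hf
    have := mul_le (isMul_sub (hM2 k) (hM1 k)) (isMul_const (ε * n)) (fun ω => by
      have := rate_three V hε hε1 n k ω
      linarith) hg
    simpa using this
  have h2 : T t f - U t f ≤ (T t f - R t f) + (ε * n * t) • T t f := by
    have : T t f - U t f = (T t f - R t f) + (R t f - U t f) := by abel
    rw [this]
    exact add_le_add le_rfl h1
  refine (norm_le_of_le h0 h2).trans ((norm_add_le _ _).trans ?_)
  rw [norm_smul, Real.norm_of_nonneg (by positivity)]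

theorem est_two (hp : p ≠ ∞) {T : ℝ → Lp ℝ p μ →L[ℝ] Lp ℝ p μ} (hT : IsC0Semigroup T)
    (hTpos : IsPositiveSG T) {V : Ω → ℝ≥0∞} (hV : LocallyMeasurable μ V)
    {ε : ℝ} (hε : 0 < ε) (hε1 : ε ≤ 1) {U : ℝ → Lp ℝ p μ →L[ℝ] Lp ℝ p μ}
    (hU : IsAbsorptionSG μ p T (smulRate ε V) U) {R : ℕ → ℝ → Lp ℝ p μ →L[ℝ] Lp ℝ p μ}
    (hR : ∀ n, IsAbsorptionSG μ p T (resid V n) (R n)) {t : ℝ} (ht : 0 ≤ t)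
    {f : Lp ℝ p μ} (hf : 0 ≤ f) {δ : ℝ} (hδ : 0 < δ) :
    ∃ N, ∀ n, N ≤ n → ‖T t f - R n t f‖ ≤ ‖T t f - U t f‖ + δ := by
  obtain ⟨S, M, hM, hP, hMn, hlim⟩ := absorb hp hT hTpos (smul_locmeas hV ε) hU
  have hL : ∀ n, ∃ L : Lp ℝ p μ →L[ℝ] Lp ℝ p μ, IsMul L (trunc V n) := fun n =>
    exists_mul hp (trunc_locmeas hV n) (C := n) fun ω => by
      rw [abs_of_nonneg (trunc_nonneg V n ω)]; exact trunc_le V n ω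
  choose L hL using hL
  have hLn : ∀ n g, 0 ≤ g → 0 ≤ L n g := fun n g hg => mul_nonneg' (hL n) (trunc_nonneg V n) hg
  obtain ⟨K, hK0, hK⟩ := sg_bound hT t
  set I : ℕ → ℕ → Lp ℝ p μ := fun k j => ∫ s in (0 : ℝ)..t, T (t - s) (L k (S j s f)) with hI
  set a : ℕ → Lp ℝ p μ := fun k => ∫ s in (0 : ℝ)..t, T (t - s) (L k (U s f)) with ha
  have hint : ∀ k j, IntervalIntegrable (fun s => T (t - s) (L k (S j s f))) volume 0 t :=
    fun k j => sg_integrable hT ht (orbit_cont (hP j).1 _ f t)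
  have hIa : ∀ k, Tendsto (fun j => I k j) atTop (𝓝 (a k)) := by
    intro k
    refine intervalIntegral.tendsto_integral_filter_of_dominated_convergence
      (fun _ => K * (‖L k‖ * (K * ‖f‖))) ?_ ?_ (by simp) ?_
    · refine Eventually.of_forall fun j => ?_
      rw [Set.uIoc_of_le ht]
      exact (hint k j).1.aestronglyMeasurable
    · refine Eventually.of_forall fun j => ae_of_all _ fun s hs => ?_
      rw [Set.uIoc_of_le ht] at hs
      refine (T (t - s)).le_of_opNorm_le_of_le (hK _ (by linarith [hs.2]) (by linarith [hs.1])) ?_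
      refine (L k).le_opNorm_of_le ?_
      refine (norm_le_of_le ((hP j).2.2 s hs.1.le f hf)
        (pert_le hT hTpos (hP j) (hMn j) hs.1.le hf)).trans ?_
      exact (T s).le_of_opNorm_le (hK _ hs.1.le hs.2) f
    · refine ae_of_all _ fun s hs => ?_
      rw [Set.uIoc_of_le ht] at hs
      exact (((T (t - s)).comp (L k)).continuous.tendsto _).comp (hlim s hs.1.le f)
  have hI0 : ∀ k j, 0 ≤ I k j := fun k j => ii_nonneg ht fun s hs hst =>
    hTpos _ (by linarith) _ (hLn k _ ((hP j).2.2 s hs f hf))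
  have ha0 : ∀ k, 0 ≤ a k := fun k => ge_of_tendsto' (hIa k) (hI0 k)
  have ham : Monotone a := by
    intro k l hkl
    refine le_of_tendsto_of_tendsto' (hIa k) (hIa l) fun j => ?_
    refine ii_mono ht (hint k j) (hint l j) fun s hs hst => ?_
    refine sg_pos_mono hTpos (by linarith) ?_
    refine mul_le (hL k) (hL l) (fun ω => ?_) ((hP j).2.2 s hs f hf)
    have h1 := rate_one V k (l - k) ω
    rw [Nat.add_sub_cancel' hkl] at h1
    have h2 := trunc_nonneg (resid V k) (l - k) ω
    linarith
  have hab : ∀ k, ‖a k‖ ≤ ε⁻¹ * ‖T t f‖ := by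
    intro k
    refine le_of_tendsto (hIa k).norm ?_
    filter_upwards [eventually_ge_atTop k] with j hj
    have h1 : ε • I k j ≤ T t f := by
      have h2 : ε • I k j ≤ T t f - S j t f := by
        rw [pert_duhamel (pert_zero hT hTpos) (hP j) ht f, hI, ← intervalIntegral.integral_smul]
        refine ii_mono ht ((hint k j).smul ε)
          (sg_integrable hT ht (orbit_cont (hP j).1 _ f t)) fun s hs hst => ?_
        rw [← map_smul, sub_zero]
        refine sg_pos_mono hTpos (by linarith) ?_
        have hmul : IsMul (ε • L k) (fun ω => ε * trunc V k ω) := by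
          intro g
          filter_upwards [hL k g, Lp.coeFn_smul ε (L k g)] with x e1 e2
          rw [smul_apply, e2, Pi.smul_apply, e1, smul_eq_mul]; ring
        exact mul_le hmul (hM j) (rate_two V hε hε1 hj) ((hP j).2.2 s hs f hf)
      exact h2.trans (sub_le_self _ ((hP j).2.2 t ht f hf))
    have h3 := norm_le_of_le (smul_nonneg hε.le (hI0 k j)) h1
    rw [norm_smul, Real.norm_of_nonneg hε.le] at h3
    rw [inv_mul_eq_div, le_div_iff₀ hε, mul_comm]
    exact h3
  obtain ⟨N, hN⟩ := mono_cauchy hp ha0 ham hab hδ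
  refine ⟨N, fun n hn => ?_⟩
  obtain ⟨S1, M1, hM1, hP1, hMn1, hlim1⟩ := absorb hp hT hTpos (resid_locmeas hV n) (hR n)
  refine le_of_tendsto (tendsto_const_nhds.sub (hlim1 t ht f)).norm (Eventually.of_forall fun m => ?_)
  have h1 : U t f - S1 m t f ≤ a (n + m) - a n := by
    refine le_of_tendsto_of_tendsto' ((hlim t ht f).sub tendsto_const_nhds)
      ((hIa (n + m)).sub (hIa n)) fun j => ?_
    refine (ineq_two hT hTpos (hP1 m) (hP j) (hMn1 m) (hMn j) ht hf).trans (le_of_eq ?_)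
    rw [hI, ← intervalIntegral.integral_sub (hint _ _) (hint _ _)]
    refine intervalIntegral.integral_congr fun s _ => ?_
    rw [← map_sub]
    congr 1
    refine Lp.ext ?_
    filter_upwards [hM1 m (S j s f), hL (n + m) (S j s f), hL n (S j s f),
      Lp.coeFn_sub (L (n + m) (S j s f)) (L n (S j s f))] with x e1 e2 e3 e4
    rw [e4, Pi.sub_apply, e1, e2, e3, rate_one]; ring
  have h0 : 0 ≤ T t f - S1 m t f := sub_nonneg.2 (pert_le hT hTpos (hP1 m) (hMn1 m) ht hf)
  have h2 : T t f - S1 m t f ≤ (T t f - U t f) + (a (n + m) - a n) := by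
    have : T t f - S1 m t f = (T t f - U t f) + (U t f - S1 m t f) := by abel
    rw [this]
    exact add_le_add le_rfl h1
  refine (norm_le_of_le h0 h2).trans ((norm_add_le _ _).trans ?_)
  exact add_le_add le_rfl (hN n (n + m) hn (Nat.le_add_right _ _)).le

end final

end AbsProof

/-- A `T`-admissible absorption rate `V : Ω → [0,∞]` is `T`-regular
(`s-lim_{ε→0+} T_{εV} = T`) if and only if it is strongly `T`-regular
(`s-lim_{n→∞} T_{V−V∧n} = T`). -/
theorem statement1
    {Ω : Type*} [MeasurableSpace Ω] (μ : Measure Ω) (p : ℝ≥0∞) [Fact (1 ≤ p)] (hp : p ≠ ∞)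
    (T : ℝ → Lp ℝ p μ →L[ℝ] Lp ℝ p μ)
    (hT : IsC0Semigroup T) (hTpos : IsPositiveSG T)
    (V : Ω → ℝ≥0∞) (hV : Admissible μ p T V)
    -- the absorption semigroups `T_{εV}` for `ε ∈ (0,1]`
    (Sε : ℝ → ℝ → Lp ℝ p μ →L[ℝ] Lp ℝ p μ)
    (hSε : ∀ ε : ℝ, 0 < ε → ε ≤ 1 → IsAbsorptionSG μ p T (smulRate ε V) (Sε ε))
    -- the absorption semigroups `T_{V − V∧n}`
    (R : ℕ → ℝ → Lp ℝ p μ →L[ℝ] Lp ℝ p μ)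
    (hR : ∀ n : ℕ, IsAbsorptionSG μ p T (resid V n) (R n)) :
    -- `V` is `T`-regular ↔ `V` is strongly `T`-regular
    (∀ t : ℝ, 0 ≤ t → ∀ f : Lp ℝ p μ,
        Tendsto (fun ε : ℝ => Sε ε t f) (𝓝[>] (0 : ℝ)) (𝓝 (T t f))) ↔
    (∀ t : ℝ, 0 ≤ t → ∀ f : Lp ℝ p μ,
        Tendsto (fun n : ℕ => R n t f) atTop (𝓝 (T t f))) := by
  have hVm := hV.1
  constructor
  · intro h t ht
    refine AbsProof.all_of_pos fun f hf => ?_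
    rw [Metric.tendsto_atTop]
    intro η hη
    have hev := (Metric.tendsto_nhds.1 (h t ht f)) (η / 2) (half_pos hη)
    have hev2 : ∀ᶠ ε : ℝ in 𝓝[>] (0 : ℝ), 0 < ε ∧ ε ≤ 1 := by
      filter_upwards [Ioc_mem_nhdsGT (zero_lt_one (α := ℝ))] with ε hε
      exact hε
    obtain ⟨ε, hd, hε, hε1⟩ := (hev.and hev2).exists
    obtain ⟨N, hN⟩ := AbsProof.est_two hp hT hTpos hVm hε hε1 (hSε ε hε hε1) hR ht hf
      (δ := η / 2) (half_pos hη)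
    refine ⟨N, fun n hn => ?_⟩
    have := hN n hn
    rw [dist_comm, dist_eq_norm] at hd ⊢
    linarith
  · intro h t ht
    refine AbsProof.all_of_pos fun f hf => ?_
    rw [Metric.tendsto_nhds]
    intro η hη
    obtain ⟨n, hn⟩ := ((Metric.tendsto_nhds.1 (h t ht f)) (η / 2) (half_pos hη)).exists
    have hlim : Tendsto (fun ε : ℝ => ε * n * t * ‖T t f‖) (𝓝[>] (0 : ℝ)) (𝓝 0) := by
      have : Tendsto (fun ε : ℝ => ε * n * t * ‖T t f‖) (𝓝 (0 : ℝ)) (𝓝 (0 * n * t * ‖T t f‖)) :=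
        Continuous.tendsto (by fun_prop) 0
      simp only [zero_mul] at this
      exact this.mono_left nhdsWithin_le_nhds
    filter_upwards [Ioc_mem_nhdsGT (zero_lt_one (α := ℝ)),
      hlim.eventually (gt_mem_nhds (half_pos hη))] with ε hε hs
    have := AbsProof.est_one hp hT hTpos hVm hε.1 hε.2 (hSε ε hε.1 hε.2) n (hR n) ht hf
    rw [dist_comm, dist_eq_norm] at hn ⊢
    linarith
end
end
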